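/- Palais–Smale condition: assume s·pᵢ(x,y) < N for all i and all (x,y) ∈ Q̄, and let λ > 0. Let {w_n} ⊆ X₀ and c ∈ ℝ be such that J_λ(w_n) → c and sup{ |⟨J'_λ(w_n), φ⟩| : φ ∈ X₀, [φ]_{s,p⃗(x,y)}(Q) ≤ 1 } → 0 as n → ∞, where ⟨J'_λ(w), φ⟩ := Σᵢ ∫∫_Q |w(x)−w(y)|^{pᵢ(x,y)−2}(w(x)−w(y))(φ(x)−φ(y))/|x−y|^{s·pᵢ(x,y)+N} dx dy + ∫_Ω |w|^{p_M(x)−2} w φ dx − λ·∫_Ω |w|^{r(x)−2} w φ dx. Then there exist a subsequence {w_{n_k}} and w ∈ X₀ with [w_{n_k} − w]_{s,p⃗(x,y)}(Q) → 0. -/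

import Mathlib

/-!
The sequence is handled in four steps.

*Boundedness.* Since `r ≤ R < m`, where `m` bounds all the exponents `p i` from below, truncation at
a large height makes the term with exponent `r` a small multiple of the `p_M` modular plus a
constant. Hence `J` is coercive and the Gagliardo modulars of `w n` are bounded (`energy_bound`).
A pointwise averaging argument in the style of Sobolev (`ball_avg`, `embed_pt`) then bounds
the `p_M` modular (`embed`): oscillation over a ball of radius `ρ` costs `ρ ^ s`, and this gain
absorbs the oscillation of the exponents on small balls. This bound is also what makes the dual norm
of `J'` a supremum of a bounded set (`deriv_bdd`).

*Compactness in `L¹`.* Averages at scale `ρ` against a Lipschitz kernel are equi-Lipschitz, so a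
subsequence of them converges for all scales `1 / (j + 1)`; the averages approximate the functions in
`L¹` at the rate `ρ ^ s` (`l1_dist_le`). So a subsequence is Cauchy in `L¹` (`compact_l1`).

*Monotonicity.* In `⟨J'(u) - J'(v), u - v⟩`, with `u` and `v` far along that subsequence, the
Palais–Smale condition makes the whole small, `L¹` closeness and truncation make the part with
exponent `r` small (`rpart_le`), and all remaining terms are nonnegative. Hence each monotone
Gagliardo term is small (`mono_le`). The inequality `abs_sub_rpow_le_mono` bounds `|a - b| ^ p` by
`η (|a| ^ p + |b| ^ p)` plus a multiple of
`(|a| ^ (p - 2) a - |b| ^ (p - 2) b) (a - b)`, uniformly for `p ∈ [m, P]`, so the Gagliardo modulars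
of `u - v` are small (`cauchy_gmod`).

*Limit.* A further subsequence converges almost everywhere, and Fatou's lemma turns the Cauchy
property into convergence of the modulars, hence of the Luxemburg seminorms (`strong_limit`).
-/

open MeasureTheory ENNReal Filter Topology

noncomputable section

abbrev Euc (N : ℕ) := EuclideanSpace ℝ (Fin N)

/-- Luxemburg norm on the variable exponent Lebesgue space `L^{q(x)}(Ω)`. -/
def luxNorm {N : ℕ} (Ω : Set (Euc N)) (q : Euc N → ℝ) (w : Euc N → ℝ) : ℝ :=
  sInf {ν : ℝ | 0 < ν ∧ (∫⁻ x in Ω, ENNReal.ofReal (|w x / ν| ^ q x)) ≤ 1}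

/-- Modular of the variable exponent Lebesgue space. -/
def luxModular {N : ℕ} (Ω : Set (Euc N)) (q : Euc N → ℝ) (w : Euc N → ℝ) : ℝ≥0∞ :=
  ∫⁻ x in Ω, ENNReal.ofReal (|w x| ^ q x)

/-- Variable exponent Gagliardo seminorm over a set `S` of pairs. -/
def gagSemi {N : ℕ} (S : Set (Euc N × Euc N)) (s : ℝ) (p : Euc N × Euc N → ℝ)
    (w : Euc N → ℝ) : ℝ :=
  sInf {ν : ℝ | 0 < ν ∧ (∫⁻ z in S, ENNReal.ofReal
      (|w z.1 - w z.2| ^ p z / (ν ^ p z * ‖z.1 - z.2‖ ^ (s * p z + N)))) ≤ 1}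

/-- Gagliardo modular over a set `S` of pairs. -/
def gagModular {N : ℕ} (S : Set (Euc N × Euc N)) (s : ℝ) (p : Euc N × Euc N → ℝ)
    (w : Euc N → ℝ) : ℝ≥0∞ :=
  ∫⁻ z in S, ENNReal.ofReal (|w z.1 - w z.2| ^ p z / ‖z.1 - z.2‖ ^ (s * p z + N))

/-- Anisotropic Gagliardo seminorm: sum over directions. -/
def WSeminorm {N : ℕ} (S : Set (Euc N × Euc N)) (s : ℝ)
    (p : Fin N → Euc N × Euc N → ℝ) (w : Euc N → ℝ) : ℝ :=
  ∑ i, gagSemi S s (p i) w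

/-- Anisotropic modular: sum over directions. -/
def WModular {N : ℕ} (S : Set (Euc N × Euc N)) (s : ℝ)
    (p : Fin N → Euc N × Euc N → ℝ) (w : Euc N → ℝ) : ℝ≥0∞ :=
  ∑ i, gagModular S s (p i) w

/-- Norm of the anisotropic fractional Sobolev space with variable exponent. -/
def WNorm {N : ℕ} (Ω : Set (Euc N)) (S : Set (Euc N × Euc N)) (s : ℝ)
    (p : Fin N → Euc N × Euc N → ℝ) (pM : Euc N → ℝ) (w : Euc N → ℝ) : ℝ :=
  WSeminorm S s p w + luxNorm Ω pM w

/-- Membership in the anisotropic fractional Sobolev space with variable exponent. -/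
def memW {N : ℕ} (Ω : Set (Euc N)) (S : Set (Euc N × Euc N)) (s : ℝ)
    (p : Fin N → Euc N × Euc N → ℝ) (pM : Euc N → ℝ) (w : Euc N → ℝ) : Prop :=
  Measurable w ∧ (∫⁻ x in Ω, ENNReal.ofReal (|w x| ^ pM x)) < ⊤ ∧
    ∀ i, ∃ ν > (0:ℝ), (∫⁻ z in S, ENNReal.ofReal
      (|w z.1 - w z.2| ^ p i z / (ν ^ p i z * ‖z.1 - z.2‖ ^ (s * p i z + N)))) < ⊤

/-- Membership in `X₀`: member of `X` vanishing a.e. outside `Ω`. -/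
def memX0 {N : ℕ} (Ω : Set (Euc N)) (Q : Set (Euc N × Euc N)) (s : ℝ)
    (p : Fin N → Euc N × Euc N → ℝ) (pM : Euc N → ℝ) (w : Euc N → ℝ) : Prop :=
  memW Ω Q s p pM w ∧ ∀ᵐ x : Euc N, x ∉ Ω → w x = 0

/-- The energy functional `J_λ` associated to the anisotropic nonlocal problem. -/
def Jfun {N : ℕ} (Ω : Set (Euc N)) (Q : Set (Euc N × Euc N)) (s : ℝ)
    (p : Fin N → Euc N × Euc N → ℝ) (pM r : Euc N → ℝ) (lam : ℝ)
    (w : Euc N → ℝ) : ℝ :=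
  (∑ i, ∫ z in Q, |w z.1 - w z.2| ^ p i z / ‖z.1 - z.2‖ ^ (s * p i z + N) / p i z) +
    (∫ x in Ω, |w x| ^ pM x / pM x) - lam * ∫ x in Ω, |w x| ^ r x / r x

/-- The Gateaux derivative pairing `⟨J'_λ(w), φ⟩`. -/
def Jderiv {N : ℕ} (Ω : Set (Euc N)) (Q : Set (Euc N × Euc N)) (s : ℝ)
    (p : Fin N → Euc N × Euc N → ℝ) (pM r : Euc N → ℝ) (lam : ℝ)
    (w φ : Euc N → ℝ) : ℝ :=
  (∑ i, ∫ z in Q, |w z.1 - w z.2| ^ (p i z - 2) * (w z.1 - w z.2) *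
      (φ z.1 - φ z.2) / ‖z.1 - z.2‖ ^ (s * p i z + N)) +
    (∫ x in Ω, |w x| ^ (pM x - 2) * w x * φ x) -
    lam * ∫ x in Ω, |w x| ^ (r x - 2) * w x * φ x

/-! ### Pointwise inequalities -/

/-- The size of the duality map `t ↦ |t|^(p-2) t`; at `t = 0` both sides vanish because `p > 1`. -/
lemma abs_dual_map (a : ℝ) {p : ℝ} (hp : 1 < p) : |(|a| ^ (p - 2) * a)| = |a| ^ (p - 1) := by
  rcases eq_or_ne a 0 with rfl | ha
  · simp [Real.zero_rpow (by linarith : p - 1 ≠ 0)]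
  · have h : 0 < |a| := abs_pos.mpr ha
    rw [abs_mul, abs_of_nonneg (Real.rpow_nonneg h.le _)]
    calc |a| ^ (p - 2) * |a| = |a| ^ (p - 2) * |a| ^ (1 : ℝ) := by rw [Real.rpow_one]
      _ = |a| ^ (p - 1) := by rw [← Real.rpow_add h]; ring_nf

lemma dual_map_of_pos {a p : ℝ} (ha : 0 < a) : |a| ^ (p - 2) * a = a ^ (p - 1) := by
  rw [abs_of_pos ha]
  calc a ^ (p - 2) * a = a ^ (p - 2) * a ^ (1 : ℝ) := by rw [Real.rpow_one]
    _ = a ^ (p - 1) := by rw [← Real.rpow_add ha]; ring_nf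

lemma rpow_sub_one_mul_self {a p : ℝ} (ha : 0 ≤ a) (hp : 1 < p) : a ^ (p - 1) * a = a ^ p := by
  rcases ha.eq_or_lt with rfl | h
  · simp [Real.zero_rpow (by linarith : p ≠ 0)]
  · calc a ^ (p - 1) * a = a ^ (p - 1) * a ^ (1 : ℝ) := by rw [Real.rpow_one]
      _ = a ^ p := by rw [← Real.rpow_add h]; ring_nf

/-- A crude form of Young's inequality. -/
lemma rpow_sub_one_mul_le {a b p : ℝ} (ha : 0 ≤ a) (hb : 0 ≤ b) (hp : 1 < p) :
    a ^ (p - 1) * b ≤ a ^ p + b ^ p := by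
  rcases le_total b a with h | h
  · calc a ^ (p - 1) * b ≤ a ^ (p - 1) * a := by gcongr
      _ = a ^ p := rpow_sub_one_mul_self ha hp
      _ ≤ _ := le_add_of_nonneg_right (Real.rpow_nonneg hb _)
  · calc a ^ (p - 1) * b ≤ b ^ (p - 1) * b := by gcongr
      _ = b ^ p := rpow_sub_one_mul_self hb hp
      _ ≤ _ := le_add_of_nonneg_left (Real.rpow_nonneg ha _)

lemma abs_dual_map_mul_le (a b : ℝ) {p : ℝ} (hp : 1 < p) :
    |(|a| ^ (p - 2) * a * b)| ≤ |a| ^ p + |b| ^ p := by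
  rw [abs_mul, abs_dual_map a hp]
  exact rpow_sub_one_mul_le (abs_nonneg _) (abs_nonneg _) hp

lemma add_rpow_le {a b p P : ℝ} (ha : 0 ≤ a) (hb : 0 ≤ b) (hp : 1 < p) (hP : p ≤ P) :
    (a + b) ^ p ≤ 2 ^ P * (a ^ p + b ^ p) := by
  have key : ∀ x y : ℝ, 0 ≤ x → x ≤ y → (x + y) ^ p ≤ 2 ^ P * (x ^ p + y ^ p) := by
    intro x y hx hxy
    have hy := hx.trans hxy
    calc (x + y) ^ p ≤ (2 * y) ^ p :=
          Real.rpow_le_rpow (by positivity) (by linarith) (by linarith)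
      _ = 2 ^ p * y ^ p := Real.mul_rpow (by norm_num) hy
      _ ≤ 2 ^ P * (x ^ p + y ^ p) := by
          gcongr
          · norm_num
          · exact le_add_of_nonneg_left (Real.rpow_nonneg hx _)
  rcases le_total a b with h | h
  · exact key a b ha h
  · rw [add_comm a, add_comm (a ^ p)]; exact key b a hb h

lemma abs_sub_rpow_le (a b : ℝ) {p P : ℝ} (hp : 1 < p) (hP : p ≤ P) :
    |a - b| ^ p ≤ 2 ^ P * (|a| ^ p + |b| ^ p) :=
  (Real.rpow_le_rpow (abs_nonneg _) (abs_sub _ _) (by linarith)).trans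
    (add_rpow_le (abs_nonneg _) (abs_nonneg _) hp hP)

/-- The case `0 < a`, `|b| ≤ a` of `abs_sub_rpow_le_mono`. -/
lemma abs_sub_rpow_le_mono_aux {a b p m P η : ℝ} (ha : 0 < a) (hb : |b| ≤ a) (hm : 1 < m)
    (hp : m ≤ p) (hP : p ≤ P) (hη : 0 < η) (hη1 : η ≤ 1) :
    0 ≤ (|a| ^ (p - 2) * a - |b| ^ (p - 2) * b) * (a - b) ∧
    |a - b| ^ p ≤ η * (|a| ^ p + |b| ^ p) + 2 ^ P / ((1 - (1 - η) ^ (m - 1)) * η) *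
      ((|a| ^ (p - 2) * a - |b| ^ (p - 2) * b) * (a - b)) := by
  have hp1 : 1 < p := by linarith
  have hba : b ≤ a := (le_abs_self b).trans hb
  have hab : 0 ≤ a - b := by linarith
  have hdb : |b| ^ (p - 2) * b ≤ |b| ^ (p - 1) :=
    (le_abs_self _).trans (abs_dual_map b hp1).le
  have hda : |a| ^ (p - 2) * a = a ^ (p - 1) := dual_map_of_pos ha
  have h1 : |b| ^ (p - 1) ≤ a ^ (p - 1) := Real.rpow_le_rpow (abs_nonneg _) hb (by linarith)
  have hlt : (1 - η) ^ (m - 1) < 1 := Real.rpow_lt_one (by linarith) (by linarith) (by linarith)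
  have hD : 0 ≤ (|a| ^ (p - 2) * a - |b| ^ (p - 2) * b) * (a - b) :=
    mul_nonneg (by linarith) hab
  refine ⟨hD, ?_⟩
  have hκ : 0 < (1 - (1 - η) ^ (m - 1)) * η := mul_pos (by linarith) hη
  have hpa : 0 ≤ |a| ^ p := Real.rpow_nonneg (abs_nonneg _) _
  have hpb : 0 ≤ |b| ^ p := Real.rpow_nonneg (abs_nonneg _) _
  rcases le_or_gt (a - b) (η * a) with h | h
  · have : |a - b| ^ p ≤ η * |a| ^ p := by
      rw [abs_of_nonneg hab, abs_of_pos ha]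
      calc (a - b) ^ p ≤ (η * a) ^ p := Real.rpow_le_rpow hab h (by linarith)
        _ = η ^ p * a ^ p := Real.mul_rpow hη.le ha.le
        _ ≤ η * a ^ p := by
          gcongr
          calc η ^ p ≤ η ^ (1 : ℝ) := Real.rpow_le_rpow_of_exponent_ge hη hη1 hp1.le
            _ = η := Real.rpow_one _
    have h3 := mul_nonneg (div_nonneg (Real.rpow_nonneg (by norm_num : (0:ℝ) ≤ 2) P) hκ.le) hD
    nlinarith
  · have hb' : |b| ^ (p - 2) * b ≤ (1 - η) ^ (m - 1) * a ^ (p - 1) := by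
      rcases le_or_gt b 0 with hb0 | hb0
      · refine (mul_nonpos_of_nonneg_of_nonpos (Real.rpow_nonneg (abs_nonneg _) _) hb0).trans ?_
        exact mul_nonneg (Real.rpow_nonneg (by linarith) _) (Real.rpow_nonneg ha.le _)
      · have hη2 : 0 < 1 - η := by
          by_contra hcon
          nlinarith
        rw [dual_map_of_pos hb0]
        calc b ^ (p - 1) ≤ ((1 - η) * a) ^ (p - 1) :=
              Real.rpow_le_rpow hb0.le (by linarith) (by linarith)
          _ = (1 - η) ^ (p - 1) * a ^ (p - 1) := Real.mul_rpow hη2.le ha.le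
          _ ≤ (1 - η) ^ (m - 1) * a ^ (p - 1) := by
              refine mul_le_mul_of_nonneg_right ?_ (Real.rpow_nonneg ha.le _)
              exact Real.rpow_le_rpow_of_exponent_ge hη2 (by linarith) (by linarith)
    have hDl : (1 - (1 - η) ^ (m - 1)) * η * a ^ p ≤
        (|a| ^ (p - 2) * a - |b| ^ (p - 2) * b) * (a - b) := by
      have h2 : (1 - (1 - η) ^ (m - 1)) * a ^ (p - 1) ≤
          |a| ^ (p - 2) * a - |b| ^ (p - 2) * b := by rw [hda]; linarith
      calc (1 - (1 - η) ^ (m - 1)) * η * a ^ p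
          = ((1 - (1 - η) ^ (m - 1)) * a ^ (p - 1)) * (η * a) := by
            rw [← rpow_sub_one_mul_self ha.le hp1]; ring
        _ ≤ _ := by
            apply mul_le_mul h2 h.le (by positivity)
            exact le_trans (mul_nonneg (by linarith) (Real.rpow_nonneg ha.le _)) h2
    have h4 : |a - b| ^ p ≤ 2 ^ P * a ^ p := by
      rw [abs_of_nonneg hab]
      calc (a - b) ^ p ≤ (2 * a) ^ p :=
            Real.rpow_le_rpow hab (by linarith [neg_abs_le b]) (by linarith)
        _ = 2 ^ p * a ^ p := Real.mul_rpow (by norm_num) ha.le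
        _ ≤ 2 ^ P * a ^ p := by gcongr; norm_num
    calc |a - b| ^ p ≤ 2 ^ P * a ^ p := h4
      _ = 2 ^ P / ((1 - (1 - η) ^ (m - 1)) * η) * ((1 - (1 - η) ^ (m - 1)) * η * a ^ p) := by
          rw [← mul_assoc, div_mul_cancel₀ _ hκ.ne']
      _ ≤ 2 ^ P / ((1 - (1 - η) ^ (m - 1)) * η) *
          ((|a| ^ (p - 2) * a - |b| ^ (p - 2) * b) * (a - b)) := by
          gcongr
      _ ≤ _ := le_add_of_nonneg_left (by positivity)

/-- Monotonicity of `t ↦ |t|^(p-2) t`, with a quantitative form that is uniform for `p ∈ [m, P]`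
and treats the degenerate (`p > 2`) and the singular (`p < 2`) range at once. -/
lemma abs_sub_rpow_le_mono (a b : ℝ) {p m P η : ℝ} (hm : 1 < m)
    (hp : m ≤ p) (hP : p ≤ P) (hη : 0 < η) (hη1 : η ≤ 1) :
    0 ≤ (|a| ^ (p - 2) * a - |b| ^ (p - 2) * b) * (a - b) ∧
    |a - b| ^ p ≤ η * (|a| ^ p + |b| ^ p) + 2 ^ P / ((1 - (1 - η) ^ (m - 1)) * η) *
      ((|a| ^ (p - 2) * a - |b| ^ (p - 2) * b) * (a - b)) := by
  have hp1 : 1 < p := by linarith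
  have key : ∀ x y : ℝ, |y| ≤ |x| →
      0 ≤ (|x| ^ (p - 2) * x - |y| ^ (p - 2) * y) * (x - y) ∧
      |x - y| ^ p ≤ η * (|x| ^ p + |y| ^ p) + 2 ^ P / ((1 - (1 - η) ^ (m - 1)) * η) *
      ((|x| ^ (p - 2) * x - |y| ^ (p - 2) * y) * (x - y)) := by
    intro x y hxy
    rcases lt_trichotomy x 0 with hx | hx | hx
    · have := abs_sub_rpow_le_mono_aux (a := -x) (b := -y) (by linarith)
        (by rwa [abs_neg, ← abs_of_neg hx]) hm hp hP hη hη1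
      rw [abs_neg, abs_neg, show -x - -y = -(x - y) by ring, abs_neg] at this
      rw [show (|x| ^ (p - 2) * x - |y| ^ (p - 2) * y) * (x - y) =
        (|x| ^ (p - 2) * -x - |y| ^ (p - 2) * -y) * -(x - y) by ring]
      exact this
    · subst hx
      have hy : y = 0 := by simpa using hxy
      subst hy
      simp [Real.zero_rpow (by linarith : p ≠ 0)]
    · exact abs_sub_rpow_le_mono_aux hx (by rwa [abs_of_pos hx] at hxy) hm hp hP hη hη1
  rcases le_total |b| |a| with h | h
  · exact key a b h
  · have := key b a h
    rw [abs_sub_comm b a, add_comm (|b| ^ p)] at this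
    rw [show (|a| ^ (p - 2) * a - |b| ^ (p - 2) * b) * (a - b) =
        (|b| ^ (p - 2) * b - |a| ^ (p - 2) * a) * (b - a) by ring]
    exact this

/-- Truncation at height `K`: a subcritical power is controlled linearly by `b` below `K` and by a
small multiple of the higher power above `K`. -/
lemma subcritical_split {M b t q R m K : ℝ} (hb : 0 ≤ b) (hbM : b ≤ M) (ht : 1 < t)
    (htR : t ≤ R) (hRm : R < m) (hmq : m ≤ q) (hK : 1 ≤ K) :
    M ^ (t - 1) * b ≤ K ^ (R - 1) * b + K ^ (R - m) * M ^ q := by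
  have hM : 0 ≤ M := hb.trans hbM
  have hK0 : 0 < K := by linarith
  rcases le_or_gt M K with h | h
  · have h1 : M ^ (t - 1) ≤ K ^ (R - 1) :=
      (Real.rpow_le_rpow hM h (by linarith)).trans
        (Real.rpow_le_rpow_of_exponent_le hK (by linarith))
    have : 0 ≤ K ^ (R - m) * M ^ q := by positivity
    nlinarith
  · have hM0 : 0 < M := by linarith
    have h1 : M ^ (t - 1) * b ≤ K ^ (R - m) * M ^ q := by
      calc M ^ (t - 1) * b ≤ M ^ (t - 1) * M := by gcongr
        _ = M ^ t := rpow_sub_one_mul_self hM ht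
        _ = M ^ (t - q) * M ^ q := by rw [← Real.rpow_add hM0]; ring_nf
        _ ≤ K ^ (R - m) * M ^ q := by
          gcongr
          calc M ^ (t - q) ≤ K ^ (t - q) :=
                Real.rpow_le_rpow_of_nonpos hK0 h.le (by linarith)
            _ ≤ K ^ (R - m) := Real.rpow_le_rpow_of_exponent_le hK (by linarith)
    have : 0 ≤ K ^ (R - 1) * b := by positivity
    linarith

/-- The power version of `subcritical_split`. -/
lemma subcritical_split_self {M t q R m K : ℝ} (hM : 0 ≤ M) (ht : 1 < t)
    (htR : t ≤ R) (hRm : R < m) (hmq : m ≤ q) (hK : 1 ≤ K) :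
    M ^ t ≤ K ^ R + K ^ (R - m) * M ^ q := by
  have hK0 : 0 < K := by linarith
  rcases le_or_gt M K with h | h
  · have h1 : M ^ t ≤ K ^ R :=
      (Real.rpow_le_rpow hM h (by linarith)).trans
        (Real.rpow_le_rpow_of_exponent_le hK (by linarith))
    have : 0 ≤ K ^ (R - m) * M ^ q := by positivity
    linarith
  · have hM0 : 0 < M := by linarith
    have h1 : M ^ t ≤ K ^ (R - m) * M ^ q := by
      calc M ^ t = M ^ (t - q) * M ^ q := by rw [← Real.rpow_add hM0]; ring_nf
        _ ≤ K ^ (R - m) * M ^ q := by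
          gcongr
          calc M ^ (t - q) ≤ K ^ (t - q) :=
                Real.rpow_le_rpow_of_nonpos hK0 h.le (by linarith)
            _ ≤ K ^ (R - m) := Real.rpow_le_rpow_of_exponent_le hK (by linarith)
    have : 0 ≤ K ^ R := by positivity
    linarith

/-- A number `K ≥ 1` with a prescribed small negative power. -/
lemma exists_rpow_small {β ε : ℝ} (hβ : β < 0) (hε : 0 < ε) : ∃ K : ℝ, 1 ≤ K ∧ K ^ β ≤ ε := by
  have h := tendsto_rpow_neg_atTop (y := -β) (by linarith)
  rw [neg_neg] at h
  obtain ⟨K, hK1, hK⟩ := ((eventually_ge_atTop (1 : ℝ)).and (h.eventually (ge_mem_nhds hε))).exists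
  exact ⟨K, hK1, hK⟩

/-- The elementary bound behind the averaging estimate; `ℓ` plays the role of a distance, `n` of the
dimension, and `A ≥ 1` is a free cut-off. -/
lemma holder_quotient_le {h ℓ ρ σ n e q A : ℝ} (hh : 0 ≤ h) (hℓ : 0 < ℓ) (hℓρ : ℓ ≤ ρ)
    (hσ : 0 < σ) (hn : 0 ≤ n) (he : 1 ≤ e) (hq : q ≤ e) (hA : 1 ≤ A) :
    h ≤ ρ ^ σ * A + ρ ^ (σ + n) * A ^ (1 - q) * (h ^ e / ℓ ^ (σ * e + n)) := by
  have hρ : 0 < ρ := by linarith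
  have hA0 : 0 < A := by linarith
  set t := h / ℓ ^ σ with ht
  have hls : 0 < ℓ ^ σ := Real.rpow_pos_of_pos hℓ _
  have ht0 : 0 ≤ t := by positivity
  have hht : h = ℓ ^ σ * t := by rw [ht]; field_simp
  have hte : h ^ e / ℓ ^ (σ * e + n) = t ^ e / ℓ ^ n := by
    rw [ht, Real.div_rpow hh hls.le, ← Real.rpow_mul hℓ.le, Real.rpow_add hℓ, div_div]
  have h1 : t ≤ A + A ^ (1 - q) * t ^ e := by
    rcases le_or_gt t A with hta | hta
    · have : 0 ≤ A ^ (1 - q) * t ^ e := by positivity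
      linarith
    · have ht1 : 0 < t := by linarith
      have : t ≤ A ^ (1 - q) * t ^ e := by
        calc t = t ^ (1 - e) * t ^ e := by rw [← Real.rpow_add ht1]; simp
          _ ≤ A ^ (1 - q) * t ^ e := by
            gcongr
            calc t ^ (1 - e) ≤ A ^ (1 - e) :=
                  Real.rpow_le_rpow_of_nonpos hA0 hta.le (by linarith)
              _ ≤ A ^ (1 - q) := Real.rpow_le_rpow_of_exponent_le hA (by linarith)
      linarith
  have h2 : t ^ e ≤ ρ ^ n * (t ^ e / ℓ ^ n) := by
    have hln : 0 < ℓ ^ n := Real.rpow_pos_of_pos hℓ _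
    rw [mul_div_assoc', le_div_iff₀ hln, mul_comm]
    gcongr
  rw [hte]
  calc h = ℓ ^ σ * t := hht
    _ ≤ ρ ^ σ * (A + A ^ (1 - q) * (ρ ^ n * (t ^ e / ℓ ^ n))) := by
        have h3 : A ^ (1 - q) * t ^ e ≤ A ^ (1 - q) * (ρ ^ n * (t ^ e / ℓ ^ n)) := by gcongr
        have h4 : ℓ ^ σ ≤ ρ ^ σ := by gcongr
        exact mul_le_mul h4 (by linarith) ht0 (by positivity)
    _ = _ := by rw [Real.rpow_add hρ]; ring

/-! ### Modulars and duality pairings over a general measure space -/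

section Modular

variable {α : Type*} [MeasurableSpace α]

/-- The data of a weighted variable exponent modular `∫ |f|^e / d ∂μ` with exponent `e ∈ [m, P]`,
`m > 1`. It covers the Gagliardo modulars (`μ` the volume on pairs, `d` a power of the distance,
`f` a difference) and the modular of `L^{p_M(x)}(Ω)` (with `d = 1`). -/
structure ModSpace (μ : Measure α) (e d : α → ℝ) (m P : ℝ) : Prop where
  he : AEMeasurable e μ
  hd : AEMeasurable d μ
  d_nonneg : ∀ z, 0 ≤ d z
  one_lt : 1 < m
  bd : ∀ᵐ z ∂μ, m ≤ e z ∧ e z ≤ P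

/-- Functions of finite modular. -/
structure FinMod (μ : Measure α) (e d f : α → ℝ) : Prop where
  meas : AEMeasurable f μ
  int : Integrable (fun z => |f z| ^ e z / d z) μ

/-- The modular `∫ |f|^e / d ∂μ`, real valued. -/
def modul (μ : Measure α) (e d f : α → ℝ) : ℝ := ∫ z, |f z| ^ e z / d z ∂μ

/-- The derivative of `∫ |f|^e / (e d) ∂μ` at `f` in direction `g`. -/
def pairing (μ : Measure α) (e d f g : α → ℝ) : ℝ :=
  ∫ z, |f z| ^ (e z - 2) * f z * g z / d z ∂μ

/-- The Luxemburg functional of the modular. -/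
def lux (μ : Measure α) (e d f : α → ℝ) : ℝ :=
  sInf {ν : ℝ | 0 < ν ∧ (∫⁻ z, ENNReal.ofReal (|f z| ^ e z / (ν ^ e z * d z)) ∂μ) ≤ 1}

variable {μ : Measure α} {e d f g h : α → ℝ} {m P : ℝ}

lemma ModSpace.term_nonneg (H : ModSpace μ e d m P) (f : α → ℝ) (z : α) :
    0 ≤ |f z| ^ e z / d z :=
  div_nonneg (Real.rpow_nonneg (abs_nonneg _) _) (H.d_nonneg z)

lemma ModSpace.modul_nonneg (H : ModSpace μ e d m P) (f : α → ℝ) : 0 ≤ modul μ e d f :=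
  integral_nonneg (H.term_nonneg f)

lemma ModSpace.aemeas_term (H : ModSpace μ e d m P) (hf : AEMeasurable f μ) :
    AEMeasurable (fun z => |f z| ^ e z / d z) μ :=
  (AEMeasurable.pow (continuous_abs.measurable.comp_aemeasurable hf) H.he).div H.hd

lemma ModSpace.lintegral_eq (H : ModSpace μ e d m P) (hf : FinMod μ e d f) :
    ∫⁻ z, ENNReal.ofReal (|f z| ^ e z / d z) ∂μ = ENNReal.ofReal (modul μ e d f) :=
  (ofReal_integral_eq_lintegral_ofReal hf.int (ae_of_all _ (H.term_nonneg f))).symm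

lemma ModSpace.finMod_of_lintegral (H : ModSpace μ e d m P) (hf : AEMeasurable f μ)
    (hi : ∫⁻ z, ENNReal.ofReal (|f z| ^ e z / d z) ∂μ < ⊤) : FinMod μ e d f := by
  refine ⟨hf, (H.aemeas_term hf).aestronglyMeasurable, ?_⟩
  rw [hasFiniteIntegral_iff_ofReal (ae_of_all _ (H.term_nonneg f))]
  exact hi

lemma ModSpace.modul_le_of_lintegral (H : ModSpace μ e d m P) (hf : AEMeasurable f μ) {B : ℝ}
    (hB : 0 ≤ B) (hi : ∫⁻ z, ENNReal.ofReal (|f z| ^ e z / d z) ∂μ ≤ ENNReal.ofReal B) :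
    modul μ e d f ≤ B := by
  have hF := H.finMod_of_lintegral hf (hi.trans_lt ENNReal.ofReal_lt_top)
  rw [H.lintegral_eq hF] at hi
  exact (ENNReal.ofReal_le_ofReal_iff hB).mp hi

lemma ModSpace.sub_finMod (H : ModSpace μ e d m P) (hf : FinMod μ e d f) (hg : FinMod μ e d g) :
    FinMod μ e d (fun z => f z - g z) ∧
      modul μ e d (fun z => f z - g z) ≤ 2 ^ P * (modul μ e d f + modul μ e d g) := by
  have hm := hf.meas.sub hg.meas
  have hb : ∀ᵐ z ∂μ, |f z - g z| ^ e z / d z ≤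
      2 ^ P * (|f z| ^ e z / d z + |g z| ^ e z / d z) := by
    filter_upwards [H.bd] with z hz
    rw [← add_div, ← mul_div_assoc]
    have hm1 := H.one_lt
    exact div_le_div_of_nonneg_right (abs_sub_rpow_le _ _ (by linarith [hz.1]) hz.2)
      (H.d_nonneg z)
  have hi : Integrable (fun z => 2 ^ P * (|f z| ^ e z / d z + |g z| ^ e z / d z)) μ :=
    (hf.int.add hg.int).const_mul _
  have hi2 : Integrable (fun z => |f z - g z| ^ e z / d z) μ := by
    refine hi.mono' (H.aemeas_term hm).aestronglyMeasurable ?_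
    filter_upwards [hb] with z hz
    rw [Real.norm_of_nonneg (H.term_nonneg (fun z => f z - g z) z)]
    exact hz
  refine ⟨⟨hm, hi2⟩, ?_⟩
  calc modul μ e d (fun z => f z - g z) ≤ ∫ z, 2 ^ P * (|f z| ^ e z / d z + |g z| ^ e z / d z) ∂μ :=
        integral_mono_ae hi2 hi hb
    _ = _ := by rw [integral_const_mul, integral_add hf.int hg.int]; rfl

lemma ModSpace.pairing_bound (H : ModSpace μ e d m P) :
    ∀ᵐ z ∂μ, ‖|f z| ^ (e z - 2) * f z * g z / d z‖ ≤ |f z| ^ e z / d z + |g z| ^ e z / d z := by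
  filter_upwards [H.bd] with z hz
  rw [Real.norm_eq_abs, abs_div, abs_of_nonneg (H.d_nonneg z), ← add_div]
  exact div_le_div_of_nonneg_right
    (abs_dual_map_mul_le _ _ (by linarith [hz.1, H.one_lt])) (H.d_nonneg z)

lemma ModSpace.pairing_integrable (H : ModSpace μ e d m P) (hf : FinMod μ e d f)
    (hg : FinMod μ e d g) :
    Integrable (fun z => |f z| ^ (e z - 2) * f z * g z / d z) μ := by
  refine (hf.int.add hg.int).mono' ?_ H.pairing_bound
  exact ((((AEMeasurable.pow (continuous_abs.measurable.comp_aemeasurable hf.meas)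
    (H.he.sub_const 2)).mul hf.meas).mul hg.meas).div H.hd).aestronglyMeasurable

lemma ModSpace.abs_pairing_le (H : ModSpace μ e d m P) (hf : FinMod μ e d f)
    (hg : FinMod μ e d g) : |pairing μ e d f g| ≤ modul μ e d f + modul μ e d g := by
  rw [modul, modul, ← integral_add hf.int hg.int]
  exact norm_integral_le_of_norm_le (hf.int.add hg.int) H.pairing_bound

/-- Integrated form of `abs_sub_rpow_le_mono`: along pairs of bounded modular, the modular of
`f - h` is small as soon as the monotone quantity on the right is. -/
lemma ModSpace.modul_sub_le_mono (H : ModSpace μ e d m P) (hf : FinMod μ e d f)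
    (hh : FinMod μ e d h) {η : ℝ} (hη : 0 < η) (hη1 : η ≤ 1) :
    0 ≤ pairing μ e d f (fun z => f z - h z) - pairing μ e d h (fun z => f z - h z) ∧
    modul μ e d (fun z => f z - h z) ≤ η * (modul μ e d f + modul μ e d h) +
      2 ^ P / ((1 - (1 - η) ^ (m - 1)) * η) *
      (pairing μ e d f (fun z => f z - h z) - pairing μ e d h (fun z => f z - h z)) := by
  have hs := (H.sub_finMod hf hh).1
  have i1 := H.pairing_integrable hf hs
  have i2 := H.pairing_integrable hh hs
  have heq : ∀ z, |f z| ^ (e z - 2) * f z * (f z - h z) / d z -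
      |h z| ^ (e z - 2) * h z * (f z - h z) / d z =
      ((|f z| ^ (e z - 2) * f z - |h z| ^ (e z - 2) * h z) * (f z - h z)) / d z := by
    intro z; ring
  have hpt : ∀ᵐ z ∂μ, 0 ≤ |f z| ^ (e z - 2) * f z * (f z - h z) / d z -
      |h z| ^ (e z - 2) * h z * (f z - h z) / d z ∧ |f z - h z| ^ e z / d z ≤
      η * (|f z| ^ e z / d z + |h z| ^ e z / d z) + 2 ^ P / ((1 - (1 - η) ^ (m - 1)) * η) *
      (|f z| ^ (e z - 2) * f z * (f z - h z) / d z -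
      |h z| ^ (e z - 2) * h z * (f z - h z) / d z) := by
    filter_upwards [H.bd] with z hz
    obtain ⟨h1, h2⟩ := abs_sub_rpow_le_mono (f z) (h z) H.one_lt hz.1 hz.2 hη hη1
    rw [heq]
    refine ⟨div_nonneg h1 (H.d_nonneg z), ?_⟩
    rw [← add_div, ← mul_div_assoc, ← mul_div_assoc, ← add_div]
    exact div_le_div_of_nonneg_right h2 (H.d_nonneg z)
  rw [pairing, pairing, ← integral_sub i1 i2]
  refine ⟨integral_nonneg_of_ae (hpt.mono fun z hz => hz.1), ?_⟩
  rw [modul, modul, modul, ← integral_add hf.int hh.int, ← integral_const_mul,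
    ← integral_const_mul]
  exact (integral_mono_ae hs.int (((hf.int.add hh.int).const_mul η).add
    ((i1.sub i2).const_mul _)) (hpt.mono fun z hz => hz.2)).trans
    (integral_add ((hf.int.add hh.int).const_mul η) ((i1.sub i2).const_mul _)).le

/-- Fatou's lemma for modulars. -/
lemma ModSpace.fatou (H : ModSpace μ e d m P) {F : ℕ → α → ℝ} (hF : ∀ n, FinMod μ e d (F n))
    (hf : AEMeasurable f μ) (hlim : ∀ᵐ z ∂μ, Tendsto (fun n => F n z) atTop (𝓝 (f z))) {B : ℝ}
    (hB : ∀ n, modul μ e d (F n) ≤ B) : FinMod μ e d f ∧ modul μ e d f ≤ B := by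
  have hB0 : 0 ≤ B := (H.modul_nonneg (F 0)).trans (hB 0)
  have key : ∫⁻ z, ENNReal.ofReal (|f z| ^ e z / d z) ∂μ ≤ ENNReal.ofReal B := by
    calc ∫⁻ z, ENNReal.ofReal (|f z| ^ e z / d z) ∂μ
        = ∫⁻ z, liminf (fun n => ENNReal.ofReal (|F n z| ^ e z / d z)) atTop ∂μ := by
          apply lintegral_congr_ae
          filter_upwards [hlim, H.bd] with z hz hb
          refine (Tendsto.liminf_eq ?_).symm
          refine ENNReal.tendsto_ofReal ?_
          refine Tendsto.div_const ?_ _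
          exact (hz.abs).rpow_const (Or.inr (by linarith [hb.1, H.one_lt]))
      _ ≤ liminf (fun n => ∫⁻ z, ENNReal.ofReal (|F n z| ^ e z / d z) ∂μ) atTop :=
          lintegral_liminf_le' fun n => (H.aemeas_term (hF n).meas).ennreal_ofReal
      _ ≤ liminf (fun _ : ℕ => ENNReal.ofReal B) atTop := by
          refine liminf_le_liminf (Eventually.of_forall fun n => ?_)
          simp only [H.lintegral_eq (hF n)]
          exact ENNReal.ofReal_le_ofReal (hB n)
      _ = ENNReal.ofReal B := liminf_const _
  exact ⟨H.finMod_of_lintegral hf (key.trans_lt ENNReal.ofReal_lt_top),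
    H.modul_le_of_lintegral hf hB0 key⟩

lemma ModSpace.lintegral_le_of_scaled (H : ModSpace μ e d m P) (f : α → ℝ) {ν C : ℝ} (hν : 0 < ν)
    (hνC : ν ≤ C) (hC : 1 ≤ C) : ∫⁻ z, ENNReal.ofReal (|f z| ^ e z / d z) ∂μ ≤
      ENNReal.ofReal (C ^ P) *
        ∫⁻ z, ENNReal.ofReal (|f z| ^ e z / (ν ^ e z * d z)) ∂μ := by
  rw [← lintegral_const_mul' _ _ ENNReal.ofReal_ne_top]
  refine lintegral_mono_ae ?_
  filter_upwards [H.bd] with z hz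
  rw [← ENNReal.ofReal_mul (by positivity)]
  refine ENNReal.ofReal_le_ofReal ?_
  have hνe : 0 < ν ^ e z := Real.rpow_pos_of_pos hν _
  have h1 : ν ^ e z ≤ C ^ P := by
    calc ν ^ e z ≤ C ^ e z := Real.rpow_le_rpow hν.le hνC (by linarith [hz.1, H.one_lt])
      _ ≤ C ^ P := Real.rpow_le_rpow_of_exponent_le hC hz.2
  have h2 : |f z| ^ e z / d z = ν ^ e z * (|f z| ^ e z / (ν ^ e z * d z)) := by
    rw [← mul_div_assoc, mul_div_mul_left _ _ hνe.ne']
  rw [h2]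
  refine mul_le_mul_of_nonneg_right h1 ?_
  exact div_nonneg (Real.rpow_nonneg (abs_nonneg _) _) (mul_nonneg hνe.le (H.d_nonneg z))

lemma ModSpace.finMod_of_scaled (H : ModSpace μ e d m P) (hf : AEMeasurable f μ) {ν : ℝ}
    (hν : 0 < ν) (hi : ∫⁻ z, ENNReal.ofReal (|f z| ^ e z / (ν ^ e z * d z)) ∂μ < ⊤) :
    FinMod μ e d f :=
  H.finMod_of_lintegral hf ((H.lintegral_le_of_scaled f hν (le_max_left ν 1)
    (le_max_right ν 1)).trans_lt (ENNReal.mul_lt_top ENNReal.ofReal_lt_top hi))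

lemma lux_nonneg : 0 ≤ lux μ e d f := Real.sInf_nonneg fun _ h => h.1.le

lemma ModSpace.mem_lux_set (H : ModSpace μ e d m P) (hf : FinMod μ e d f) {ν c : ℝ}
    (hc : ∀ᵐ z ∂μ, 1 / ν ^ e z ≤ c) (hc0 : 0 ≤ c) (hm : c * modul μ e d f ≤ 1) :
    (∫⁻ z, ENNReal.ofReal (|f z| ^ e z / (ν ^ e z * d z)) ∂μ) ≤ 1 := by
  calc (∫⁻ z, ENNReal.ofReal (|f z| ^ e z / (ν ^ e z * d z)) ∂μ)
      ≤ ∫⁻ z, ENNReal.ofReal (c * (|f z| ^ e z / d z)) ∂μ := by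
        refine lintegral_mono_ae ?_
        filter_upwards [hc] with z hz
        refine ENNReal.ofReal_le_ofReal ?_
        rw [show |f z| ^ e z / (ν ^ e z * d z) = 1 / ν ^ e z * (|f z| ^ e z / d z) by
          rw [div_mul_div_comm, one_mul]]
        exact mul_le_mul_of_nonneg_right hz (H.term_nonneg f z)
    _ = ENNReal.ofReal (c * modul μ e d f) := by
        rw [modul, ← integral_const_mul, ofReal_integral_eq_lintegral_ofReal (hf.int.const_mul c)]
        exact ae_of_all _ fun z => mul_nonneg hc0 (H.term_nonneg f z)
    _ ≤ 1 := by rw [← ENNReal.ofReal_one]; exact ENNReal.ofReal_le_ofReal hm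

lemma ModSpace.lux_le_of_small (H : ModSpace μ e d m P) (hf : FinMod μ e d f) {ν : ℝ}
    (hν : 0 < ν) (hν1 : ν ≤ 1) (hm : modul μ e d f ≤ ν ^ P) : lux μ e d f ≤ ν := by
  have hp : 0 < ν ^ P := Real.rpow_pos_of_pos hν _
  refine csInf_le ⟨0, fun _ h => h.1.le⟩ ⟨hν, H.mem_lux_set (c := 1 / ν ^ P) hf ?_ (by positivity) ?_⟩
  · filter_upwards [H.bd] with z hz
    exact one_div_le_one_div_of_le hp (Real.rpow_le_rpow_of_exponent_ge hν hν1 hz.2)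
  · rw [one_div, inv_mul_le_iff₀ hp, mul_one]; exact hm

lemma ModSpace.lux_set_large (H : ModSpace μ e d m P) (hf : FinMod μ e d f) {ν : ℝ}
    (hν1 : 1 ≤ ν) (hm : modul μ e d f ≤ ν) :
    (∫⁻ z, ENNReal.ofReal (|f z| ^ e z / (ν ^ e z * d z)) ∂μ) ≤ 1 := by
  have hp : 0 < ν := by linarith
  refine H.mem_lux_set (c := 1 / ν) hf ?_ (by positivity) ?_
  · filter_upwards [H.bd] with z hz
    refine one_div_le_one_div_of_le hp ?_
    calc ν = ν ^ (1 : ℝ) := (Real.rpow_one _).symm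
      _ ≤ ν ^ e z := Real.rpow_le_rpow_of_exponent_le hν1 (by linarith [hz.1, H.one_lt])
  · rw [one_div, inv_mul_le_iff₀ hp, mul_one]; exact hm

lemma ModSpace.lux_le_of_large (H : ModSpace μ e d m P) (hf : FinMod μ e d f) {ν : ℝ}
    (hν1 : 1 ≤ ν) (hm : modul μ e d f ≤ ν) : lux μ e d f ≤ ν :=
  csInf_le ⟨0, fun _ h => h.1.le⟩ ⟨by linarith, H.lux_set_large hf hν1 hm⟩

lemma ModSpace.modul_le_of_lux_le (H : ModSpace μ e d m P) (hf : FinMod μ e d f)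
    (hl : lux μ e d f ≤ 1) : modul μ e d f ≤ 2 ^ P := by
  have hne : {ν : ℝ | 0 < ν ∧ (∫⁻ z, ENNReal.ofReal (|f z| ^ e z / (ν ^ e z * d z)) ∂μ) ≤ 1}.Nonempty :=
    ⟨max 1 (modul μ e d f), by positivity, H.lux_set_large hf (le_max_left _ _) (le_max_right _ _)⟩
  obtain ⟨ν, ⟨hν, hi⟩, hν2⟩ := exists_lt_of_csInf_lt hne (show lux μ e d f < 2 by linarith)
  refine H.modul_le_of_lintegral hf.meas (by positivity) ?_
  refine (H.lintegral_le_of_scaled f hν hν2.le (by norm_num)).trans ?_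
  calc _ ≤ ENNReal.ofReal (2 ^ P) * 1 := by gcongr
    _ = _ := mul_one _

/-- Dividing by `T ≥ 1` brings functions of modular at most `T` into the unit ball, with a factor
`k` to spare for sums of `k` Luxemburg norms. -/
lemma ModSpace.lux_scaled_le (H : ModSpace μ e d m P) (hf : FinMod μ e d f) {T k : ℝ} (hk : 1 ≤ k)
    (hT : 1 ≤ T) (hm : modul μ e d f ≤ T) :
    FinMod μ e d (fun z => (1 / (k * T)) * f z) ∧
      lux μ e d (fun z => (1 / (k * T)) * f z) ≤ 1 / k := by
  have hk0 : 0 < k := by linarith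
  have hT0 : 0 < T := by linarith
  have hc : 0 < 1 / (k * T) := by positivity
  have hterm : ∀ᵐ z ∂μ, |1 / (k * T) * f z| ^ e z / ((1 / k) ^ e z * d z) =
      |f z| ^ e z / (T ^ e z * d z) := by
    filter_upwards [] with z
    rw [abs_mul, abs_of_pos hc, Real.mul_rpow hc.le (abs_nonneg _),
      show 1 / (k * T) = (1 / k) * (1 / T) by rw [div_mul_div_comm, one_mul],
      Real.mul_rpow (by positivity) (by positivity), Real.div_rpow zero_le_one hT0.le, Real.one_rpow]
    have h1 : 0 < (1 / k) ^ e z := by positivity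
    have h2 : 0 < T ^ e z := by positivity
    rw [mul_assoc, mul_div_mul_left _ _ h1.ne', one_div_mul_eq_div, div_div]
  have hi : (∫⁻ z, ENNReal.ofReal (|1 / (k * T) * f z| ^ e z / ((1 / k) ^ e z * d z)) ∂μ) ≤ 1 := by
    rw [lintegral_congr_ae (hterm.mono fun z hz => by rw [hz])]
    exact H.lux_set_large hf hT hm
  refine ⟨H.finMod_of_scaled (hf.meas.const_mul _) (by positivity : 0 < 1 / k)
    (hi.trans_lt ENNReal.one_lt_top), csInf_le ⟨0, fun _ h => h.1.le⟩ ⟨by positivity, hi⟩⟩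

lemma pairing_const_mul (c : ℝ) :
    pairing μ e d f (fun z => c * g z) = c * pairing μ e d f g := by
  rw [pairing, pairing, ← integral_const_mul]
  congr 1; ext z; ring

end Modular

/-! ### The Gagliardo modulars and their slices -/

/-- The hypotheses on the domain and the exponents. Here `m` is the lower bound of all `p i`,
`P` an upper bound, and `R < m` an upper bound of `r`. -/
structure Setup {N : ℕ} (Ω : Set (Euc N)) (s : ℝ) (Q : Set (Euc N × Euc N))
    (p : Fin N → Euc N × Euc N → ℝ) (pM r : Euc N → ℝ) (m R P : ℝ) : Prop where
  hN : 2 ≤ N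
  ho : IsOpen Ω
  hb : Bornology.IsBounded Ω
  hs : 0 < s
  hQ : Q = (Ωᶜ ×ˢ Ωᶜ)ᶜ
  hpc : ∀ i, ContinuousOn (p i) (closure Q)
  hpb : ∀ i, ∀ z ∈ closure Q, m ≤ p i z ∧ p i z ≤ P
  hpM : ∀ x, pM x = ⨆ i, p i (x, x)
  hrc : ContinuousOn r (closure Ω)
  hr : ∀ x ∈ closure Ω, 1 < r x ∧ r x ≤ R
  hR : R < m
  hm : 1 < m

/-- The Gagliardo weight. -/
def gagW {N : ℕ} (s : ℝ) (p : Euc N × Euc N → ℝ) (z : Euc N × Euc N) : ℝ :=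
  ‖z.1 - z.2‖ ^ (s * p z + N)

/-- The difference `φ(x) - φ(y)` as a function on pairs. -/
def diffF {N : ℕ} (φ : Euc N → ℝ) (z : Euc N × Euc N) : ℝ := φ z.1 - φ z.2

/-- The `i`-th Gagliardo modular, real valued. -/
def gmod {N : ℕ} (Q : Set (Euc N × Euc N)) (s : ℝ) (p : Euc N × Euc N → ℝ) (φ : Euc N → ℝ) : ℝ :=
  modul (volume.restrict Q) p (gagW s p) (diffF φ)

/-- The modular of `L^{p_M(x)}(Ω)`, real valued. -/
def omod {N : ℕ} (Ω : Set (Euc N)) (pM : Euc N → ℝ) (φ : Euc N → ℝ) : ℝ :=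
  modul (volume.restrict Ω) pM (fun _ => 1) φ

/-- The Gagliardo density `x ↦ ∫ |φ(x) - φ(y)|^p / |x - y|^(s p + N) dy`. -/
def slice {N : ℕ} (s : ℝ) (p : Euc N × Euc N → ℝ) (φ : Euc N → ℝ) (x : Euc N) : ℝ :=
  ∫ y, |φ x - φ y| ^ p (x, y) / ‖x - y‖ ^ (s * p (x, y) + N)

/-- `memX0` in terms of real modulars. -/
structure MX {N : ℕ} (Ω : Set (Euc N)) (s : ℝ) (Q : Set (Euc N × Euc N))
    (p : Fin N → Euc N × Euc N → ℝ) (pM : Euc N → ℝ) (φ : Euc N → ℝ) : Prop where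
  meas : Measurable φ
  om : FinMod (volume.restrict Ω) pM (fun _ => 1) φ
  gm : ∀ i, FinMod (volume.restrict Q) (p i) (gagW s (p i)) (diffF φ)
  zero : ∀ᵐ x : Euc N, x ∉ Ω → φ x = 0

section

variable {N : ℕ} {Ω : Set (Euc N)} {s : ℝ} {Q : Set (Euc N × Euc N)}
  {p : Fin N → Euc N × Euc N → ℝ} {pM r : Euc N → ℝ} {m R P : ℝ} {φ ψ : Euc N → ℝ}

lemma diffF_meas (h : Measurable φ) : Measurable (diffF φ) :=
  (h.comp measurable_fst).sub (h.comp measurable_snd)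

lemma diffF_sub : diffF (fun x => φ x - ψ x) = fun z => diffF φ z - diffF ψ z := by
  ext z; simp only [diffF]; ring

lemma diffF_const_mul (c : ℝ) : diffF (fun x => c * φ x) = fun z => c * diffF φ z := by
  ext z; simp only [diffF]; ring

lemma gagSemi_eq_lux (p : Euc N × Euc N → ℝ) :
    gagSemi Q s p φ = lux (volume.restrict Q) p (gagW s p) (diffF φ) := rfl

lemma gagW_nonneg (p : Euc N × Euc N → ℝ) (z) : 0 ≤ gagW s p z :=
  Real.rpow_nonneg (norm_nonneg _) _

namespace Setup

lemma mem_Q (H : Setup Ω s Q p pM r m R P) {x y : Euc N} (hx : x ∈ Ω) : (x, y) ∈ Q := by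
  rw [H.hQ]; simp [hx]

lemma measQ (H : Setup Ω s Q p pM r m R P) : MeasurableSet Q := by
  rw [H.hQ]
  exact (H.ho.measurableSet.compl.prod H.ho.measurableSet.compl).compl

lemma bd (H : Setup Ω s Q p pM r m R P) (i) {x y : Euc N} (hx : x ∈ Ω) :
    m ≤ p i (x, y) ∧ p i (x, y) ≤ P := H.hpb i _ (subset_closure (H.mem_Q hx))

lemma i0 (H : Setup Ω s Q p pM r m R P) : Nonempty (Fin N) :=
  ⟨⟨0, by have := H.hN; omega⟩⟩

lemma nontriv (H : Setup Ω s Q p pM r m R P) : Nontrivial (Euc N) := by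
  have : Nonempty (Fin N) := H.i0
  infer_instance

lemma modQ (H : Setup Ω s Q p pM r m R P) (i) :
    ModSpace (volume.restrict Q) (p i) (gagW s (p i)) m P := by
  have hp : AEMeasurable (p i) (volume.restrict Q) :=
    ((H.hpc i).mono subset_closure).aemeasurable H.measQ
  refine ⟨hp, ?_, gagW_nonneg _, H.hm, ?_⟩
  · exact AEMeasurable.pow (by fun_prop) ((hp.const_mul s).add_const _)
  · exact ae_restrict_of_forall_mem H.measQ fun z hz => H.hpb i z (subset_closure hz)

lemma pM_bd (H : Setup Ω s Q p pM r m R P) {x : Euc N} (hx : x ∈ Ω) : m ≤ pM x ∧ pM x ≤ P := by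
  have := H.i0
  rw [H.hpM]
  exact ⟨(H.bd (Classical.arbitrary _) hx).1.trans
    (le_ciSup (f := fun i => p i (x, x)) (Set.finite_range _).bddAbove (Classical.arbitrary _)),
    ciSup_le fun i => (H.bd i hx).2⟩

lemma modΩ (H : Setup Ω s Q p pM r m R P) :
    ModSpace (volume.restrict Ω) pM (fun _ => (1 : ℝ)) m P := by
  refine ⟨?_, aemeasurable_const, fun _ => zero_le_one, H.hm, ?_⟩
  · have h : AEMeasurable (fun x => ⨆ i, p i (x, x)) (volume.restrict Ω) := by
      refine AEMeasurable.iSup fun i => ?_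
      refine ContinuousOn.aemeasurable ?_ H.ho.measurableSet
      refine (H.hpc i).comp (f := fun x : Euc N => (x, x)) (by fun_prop) fun x hx =>
        subset_closure (H.mem_Q hx)
    rwa [show pM = fun x => ⨆ i, p i (x, x) from funext H.hpM]
  · exact ae_restrict_of_forall_mem H.ho.measurableSet fun z hz => H.pM_bd hz

lemma finΩ (H : Setup Ω s Q p pM r m R P) : IsFiniteMeasure (volume.restrict Ω) :=
  ⟨by rw [Measure.restrict_apply_univ]; exact H.hb.measure_lt_top⟩

lemma memX0_iff (H : Setup Ω s Q p pM r m R P) : memX0 Ω Q s p pM φ ↔ MX Ω s Q p pM φ := by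
  constructor
  · rintro ⟨⟨h1, h2, h3⟩, h4⟩
    refine ⟨h1, H.modΩ.finMod_of_lintegral h1.aemeasurable (by simpa using h2), fun i => ?_, h4⟩
    obtain ⟨ν, hν, hi⟩ := h3 i
    exact (H.modQ i).finMod_of_scaled (diffF_meas h1).aemeasurable hν hi
  · rintro ⟨h1, h2, h3, h4⟩
    refine ⟨⟨h1, ?_, fun i => ⟨1, one_pos, ?_⟩⟩, h4⟩
    · have := H.modΩ.lintegral_eq h2
      simp only [div_one] at this
      rw [this]; exact ENNReal.ofReal_lt_top
    · have := (H.modQ i).lintegral_eq (h3 i)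
      simp only [Real.one_rpow, one_mul]
      exact this.trans_lt ENNReal.ofReal_lt_top

lemma sub (H : Setup Ω s Q p pM r m R P) (hφ : MX Ω s Q p pM φ) (hψ : MX Ω s Q p pM ψ) :
    MX Ω s Q p pM (fun x => φ x - ψ x) := by
  refine ⟨hφ.meas.sub hψ.meas, (H.modΩ.sub_finMod hφ.om hψ.om).1, fun i => ?_, ?_⟩
  · rw [diffF_sub]; exact ((H.modQ i).sub_finMod (hφ.gm i) (hψ.gm i)).1
  · filter_upwards [hφ.zero, hψ.zero] with x h1 h2 hx
    rw [h1 hx, h2 hx, sub_zero]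

lemma slice_nonneg (x : Euc N) (i) : 0 ≤ slice s (p i) φ x :=
  integral_nonneg fun _ => div_nonneg (Real.rpow_nonneg (abs_nonneg _) _)
    (Real.rpow_nonneg (norm_nonneg _) _)

/-- `Ω × ℝ^N ⊆ Q`, so Fubini applies to the Gagliardo integrand over `Ω × ℝ^N`. -/
lemma slice_props (H : Setup Ω s Q p pM r m R P) (hφ : MX Ω s Q p pM φ) (i) :
    (∀ᵐ x ∂(volume.restrict Ω), Integrable (fun y =>
      |φ x - φ y| ^ p i (x, y) / ‖x - y‖ ^ (s * p i (x, y) + N))) ∧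
    Integrable (slice s (p i) φ) (volume.restrict Ω) ∧
    ∫ x in Ω, slice s (p i) φ x ≤ gmod Q s (p i) φ := by
  have hsub : Ω ×ˢ (Set.univ : Set (Euc N)) ⊆ Q := fun z hz => H.mem_Q (y := z.2) hz.1
  have hint := (hφ.gm i).int
  have h2 : Integrable (fun z : Euc N × Euc N => |diffF φ z| ^ p i z / gagW s (p i) z)
      ((volume.restrict Ω).prod volume) := by
    have := hint.mono_measure (Measure.restrict_mono_set volume hsub)
    rwa [Measure.volume_eq_prod, ← Measure.prod_restrict, Measure.restrict_univ] at this
  refine ⟨h2.prod_right_ae, h2.integral_prod_left, ?_⟩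
  calc ∫ x in Ω, slice s (p i) φ x
      = ∫ z, |diffF φ z| ^ p i z / gagW s (p i) z ∂((volume.restrict Ω).prod volume) :=
        (integral_prod _ h2).symm
    _ = ∫ z in Ω ×ˢ (Set.univ : Set (Euc N)), |diffF φ z| ^ p i z / gagW s (p i) z := by
        rw [Measure.volume_eq_prod, ← Measure.prod_restrict, Measure.restrict_univ]
    _ ≤ gmod Q s (p i) φ :=
        setIntegral_mono_set hint (ae_of_all _ ((H.modQ i).term_nonneg _)) hsub.eventuallyLE

/-- Volume of the unit ball. -/
abbrev ub (N : ℕ) : ℝ := volume.real (Metric.ball (0 : Euc N) 1)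

lemma ub_pos : 0 < ub N :=
  ENNReal.toReal_pos (Metric.measure_ball_pos _ _ one_pos).ne' measure_ball_lt_top.ne

lemma vol_ball (H : Setup Ω s Q p pM r m R P) (x : Euc N) {ρ : ℝ} (hρ : 0 ≤ ρ) :
    volume.real (Metric.ball x ρ) = ρ ^ (N : ℝ) * ub N := by
  have := H.nontriv
  rw [measureReal_def, Measure.addHaar_ball volume x hρ, ENNReal.toReal_mul,
    ENNReal.toReal_ofReal (by positivity), finrank_euclideanSpace_fin, Real.rpow_natCast]
  rfl

/-- Poincaré inequality: a far ball outside `Ω`, where `φ = 0`, makes the density control `|φ|`. -/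
lemma poincare_pt (H : Setup Ω s Q p pM r m R P) :
    ∃ C, 0 ≤ C ∧ ∀ φ, MX Ω s Q p pM φ → ∀ i, ∀ᵐ x ∂(volume.restrict Ω),
      |φ x| ≤ 1 + C * slice s (p i) φ x := by
  have := H.nontriv
  obtain ⟨L, hL0, hL⟩ : ∃ L : ℝ, 0 < L ∧ ∀ x ∈ Ω, ‖x‖ < L := by
    obtain ⟨L, hL0, hL⟩ := H.hb.subset_ball_lt 0 0
    exact ⟨L, hL0, fun x hx => by simpa using hL hx⟩
  obtain ⟨y0, hy0⟩ : ∃ y0 : Euc N, ‖y0‖ = L + 1 :=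
    exists_norm_eq (Euc N) (by linarith)
  have hm := H.hm
  have hs := H.hs
  set T : ℝ := 2 * L + 2 with hT
  set D : ℝ := T ^ (s * P + N) with hD
  have hD0 : 0 < D := by positivity
  have hub := ub_pos (N := N)
  refine ⟨D / ub N, by positivity, fun φ hφ i => ?_⟩
  filter_upwards [(H.slice_props hφ i).1, ae_restrict_mem H.ho.measurableSet] with x hx hxΩ
  set G : Euc N → ℝ := fun y => |φ x - φ y| ^ p i (x, y) / ‖x - y‖ ^ (s * p i (x, y) + N) with hG
  have hG0 : ∀ y, 0 ≤ G y := fun y => by positivity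
  set B := Metric.ball y0 1 with hB
  have hBm : MeasurableSet B := measurableSet_ball
  have hpt : ∀ᵐ y ∂(volume.restrict B), |φ x| ≤ 1 + D * G y := by
    filter_upwards [ae_restrict_mem hBm, ae_restrict_of_ae hφ.zero] with y hyB hy
    have hyB' : ‖y - y0‖ < 1 := by simpa [hB, dist_eq_norm] using hyB
    have hyn : L < ‖y‖ := by
      have := norm_sub_norm_le y0 y
      rw [norm_sub_rev] at this; linarith
    have hyΩ : y ∉ Ω := fun hc => by linarith [hL y hc]
    have hxy : ‖x - y‖ ≤ T := by
      have h1 := norm_sub_le x y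
      have h2 := norm_sub_norm_le y y0
      linarith [hL x hxΩ]
    have hxy0 : 0 < ‖x - y‖ := by
      rw [norm_pos_iff, sub_ne_zero]; rintro rfl; exact hyΩ hxΩ
    obtain ⟨hp1, hp2⟩ := H.bd i (y := y) hxΩ
    have hW : ‖x - y‖ ^ (s * p i (x, y) + N) ≤ D := by
      calc ‖x - y‖ ^ (s * p i (x, y) + N) ≤ T ^ (s * p i (x, y) + N) :=
            Real.rpow_le_rpow hxy0.le hxy (by nlinarith [Nat.cast_nonneg (α := ℝ) N])
        _ ≤ D := Real.rpow_le_rpow_of_exponent_le (by linarith) (by nlinarith)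
    have hW0 : 0 < ‖x - y‖ ^ (s * p i (x, y) + N) := by positivity
    have hDG : |φ x| ^ p i (x, y) ≤ D * G y := by
      simp only [hG, hy hyΩ, sub_zero]
      rw [← mul_div_assoc, le_div_iff₀ hW0, mul_comm]
      gcongr
    rcases le_or_gt |φ x| 1 with h | h
    · have := mul_nonneg hD0.le (hG0 y); linarith
    · have : |φ x| ≤ |φ x| ^ p i (x, y) := by
        calc |φ x| = |φ x| ^ (1 : ℝ) := (Real.rpow_one _).symm
          _ ≤ _ := Real.rpow_le_rpow_of_exponent_le h.le (by linarith)
      linarith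
  have hvB : volume.real B = ub N := by
    rw [hB, H.vol_ball y0 zero_le_one, Real.one_rpow, one_mul]
  have hfin : IsFiniteMeasure (volume.restrict B) :=
    ⟨by rw [Measure.restrict_apply_univ]; exact measure_ball_lt_top⟩
  have hiB : Integrable G (volume.restrict B) := hx.integrableOn
  have h1 : ∫ y in B, |φ x| ≤ ∫ y in B, (1 + D * G y) :=
    integral_mono_ae (integrable_const _) ((integrable_const _).add (hiB.const_mul D)) hpt
  rw [integral_add (integrable_const _) (hiB.const_mul D), integral_const_mul, setIntegral_const,
    setIntegral_const, hvB, smul_eq_mul, smul_eq_mul, mul_one] at h1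
  have h2 : ∫ y in B, G y ≤ slice s (p i) φ x :=
    setIntegral_le_integral hx (ae_of_all _ hG0)
  have h3 : ub N * |φ x| ≤ ub N + D * slice s (p i) φ x := by
    have := mul_le_mul_of_nonneg_left h2 hD0.le
    linarith
  calc |φ x| ≤ (ub N + D * slice s (p i) φ x) / ub N := by
        rw [le_div_iff₀ hub]; linarith
    _ = 1 + D / ub N * slice s (p i) φ x := by field_simp

/-- Functions in `X₀` are integrable on `ℝ^N`, with control by any one of the modulars. -/
lemma l1_bound (H : Setup Ω s Q p pM r m R P) :
    ∃ C, 0 ≤ C ∧ ∀ φ, MX Ω s Q p pM φ → Integrable φ ∧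
      ∀ i, ∫ x, |φ x| ≤ C * (1 + gmod Q s (p i) φ) := by
  obtain ⟨C, hC, h⟩ := H.poincare_pt
  have := H.finΩ
  have hV : 0 ≤ volume.real Ω := measureReal_nonneg
  refine ⟨volume.real Ω + C, by positivity, fun φ hφ => ?_⟩
  have hind : φ =ᵐ[volume] Ω.indicator φ := by
    filter_upwards [hφ.zero] with x hx
    by_cases hxΩ : x ∈ Ω
    · simp [hxΩ]
    · simp [hxΩ, hx hxΩ]
  have hgi : ∀ i, Integrable (fun x => 1 + C * slice s (p i) φ x) (volume.restrict Ω) := fun i =>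
    (integrable_const _).add ((H.slice_props hφ i).2.1.const_mul C)
  have hiΩ : IntegrableOn φ Ω := by
    obtain ⟨i⟩ := H.i0
    exact (hgi i).mono' hφ.meas.aestronglyMeasurable (h φ hφ i)
  have hi : Integrable φ :=
    (integrable_congr hind).mpr (hiΩ.integrable_indicator H.ho.measurableSet)
  refine ⟨hi, fun i => ?_⟩
  have h1 : ∫ x, |φ x| = ∫ x in Ω, |φ x| := by
    refine (setIntegral_eq_integral_of_ae_compl_eq_zero ?_).symm
    filter_upwards [hφ.zero] with x hx hxΩ
    rw [hx hxΩ, abs_zero]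
  have h2 : ∫ x in Ω, |φ x| ≤ ∫ x in Ω, (1 + C * slice s (p i) φ x) :=
    integral_mono_ae hiΩ.abs (hgi i) (h φ hφ i)
  rw [integral_add (integrable_const _) ((H.slice_props hφ i).2.1.const_mul C),
    integral_const_mul, setIntegral_const, smul_eq_mul, mul_one] at h2
  have h3 := mul_le_mul_of_nonneg_left (H.slice_props hφ i).2.2 hC
  have h4 : 0 ≤ gmod Q s (p i) φ := (H.modQ i).modul_nonneg _
  rw [h1]
  nlinarith

/-- Averaging estimate: the mean oscillation of `φ` over a small ball around `x` is controlled by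
the Gagliardo density at `x`. The cut-off `A` is free. -/
lemma ball_avg (H : Setup Ω s Q p pM r m R P) {x : Euc N} (hx : x ∈ Ω) (hφ : Integrable φ) (i)
    (hsl : Integrable (fun y => |φ x - φ y| ^ p i (x, y) / ‖x - y‖ ^ (s * p i (x, y) + N)))
    {ρ q A : ℝ} (hρ : 0 < ρ) (hA : 1 ≤ A) (hq : ∀ y ∈ Metric.ball x ρ, q ≤ p i (x, y)) :
    ∫ y in Metric.ball x ρ, |φ x - φ y| ≤
      ρ ^ (s + N) * (ub N * A + A ^ (1 - q) * slice s (p i) φ x) := by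
  have hm := H.hm
  set G : Euc N → ℝ := fun y => |φ x - φ y| ^ p i (x, y) / ‖x - y‖ ^ (s * p i (x, y) + N) with hG
  have hG0 : ∀ y, 0 ≤ G y := fun y => by positivity
  have hA0 : 0 < A := by linarith
  set B := Metric.ball x ρ with hB
  have hfin : IsFiniteMeasure (volume.restrict B) :=
    ⟨by rw [Measure.restrict_apply_univ]; exact measure_ball_lt_top⟩
  have hpt : ∀ᵐ y ∂(volume.restrict B),
      |φ x - φ y| ≤ ρ ^ s * A + ρ ^ (s + N) * A ^ (1 - q) * G y := by
    filter_upwards [ae_restrict_mem measurableSet_ball] with y hy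
    have hxy : ‖x - y‖ < ρ := by
      rw [norm_sub_rev]; simpa [hB, dist_eq_norm] using hy
    rcases eq_or_ne x y with rfl | hne
    · have := hG0 x
      simp only [sub_self, abs_zero]
      positivity
    · exact holder_quotient_le (abs_nonneg _) (norm_pos_iff.mpr (sub_ne_zero.mpr hne)) hxy.le
        H.hs (Nat.cast_nonneg _) (by linarith [(H.bd i (y := y) hx).1]) (hq y hy) hA
  have hiB : Integrable G (volume.restrict B) := hsl.integrableOn
  have hi1 : Integrable (fun y => |φ x - φ y|) (volume.restrict B) :=
    ((integrable_const _).sub hφ.integrableOn).abs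
  have h1 := integral_mono_ae hi1 ((integrable_const (ρ ^ s * A)).add
    (hiB.const_mul (ρ ^ (s + N) * A ^ (1 - q)))) hpt
  simp only [Pi.add_apply] at h1
  rw [integral_add (integrable_const _) (hiB.const_mul _),
    integral_const_mul (ρ ^ (s + N) * A ^ (1 - q)) G, setIntegral_const,
    hB, H.vol_ball x hρ.le, smul_eq_mul, ← hB] at h1
  have h2 : ∫ y in B, G y ≤ slice s (p i) φ x :=
    setIntegral_le_integral hsl (ae_of_all _ hG0)
  have h3 : ρ ^ (s + N) * A ^ (1 - q) * ∫ y in B, G y ≤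
      ρ ^ (s + N) * A ^ (1 - q) * slice s (p i) φ x :=
    mul_le_mul_of_nonneg_left h2 (by positivity)
  calc _ ≤ _ := h1
    _ ≤ ρ ^ (N : ℝ) * ub N * (ρ ^ s * A) + ρ ^ (s + N) * A ^ (1 - q) * slice s (p i) φ x := by
        linarith
    _ = _ := by rw [Real.rpow_add hρ]; ring

end Setup

end

/-! ### The embedding of `X₀` into `L^{p_M(x)}(Ω)` -/

section

variable {N : ℕ} {Ω : Set (Euc N)} {s : ℝ} {Q : Set (Euc N × Euc N)}
  {p : Fin N → Euc N × Euc N → ℝ} {pM r : Euc N → ℝ} {m R P : ℝ} {φ ψ : Euc N → ℝ}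

namespace Setup

/-- Uniform continuity of the exponents near the diagonal of `Ω × Ω`. -/
lemma exists_delta (H : Setup Ω s Q p pM r m R P) {ε : ℝ} (hε : 0 < ε) :
    ∃ δ, 0 < δ ∧ δ ≤ 1 ∧ ∀ i, ∀ x ∈ Ω, ∀ y ∈ Metric.ball x δ, p i (x, x) - ε ≤ p i (x, y) := by
  obtain ⟨L, hL⟩ := H.hb.subset_closedBall 0
  set K : Set (Euc N × Euc N) := closure Ω ×ˢ Metric.closedBall 0 (L + 1) with hK
  have hKc : IsCompact K := H.hb.isCompact_closure.prod (isCompact_closedBall _ _)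
  have hKQ : K ⊆ closure Q := by
    have h1 : closure (Ω ×ˢ (Set.univ : Set (Euc N))) ⊆ closure Q :=
      closure_mono fun z hz => H.mem_Q (y := z.2) hz.1
    rw [closure_prod_eq, closure_univ] at h1
    exact fun z hz => h1 ⟨hz.1, trivial⟩
  have hev : ∀ᶠ δ in 𝓝[>] (0 : ℝ), ∀ i, ∀ x ∈ Ω, ∀ y ∈ Metric.ball x (min δ 1),
      p i (x, x) - ε ≤ p i (x, y) := by
    refine eventually_all.mpr fun i => ?_
    have hu := hKc.uniformContinuousOn_of_continuous ((H.hpc i).mono hKQ)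
    obtain ⟨δ, hδ, h⟩ := Metric.uniformContinuousOn_iff.mp hu ε hε
    filter_upwards [Ioo_mem_nhdsGT hδ] with δ' hδ' x hx y hy
    have hxL : dist x 0 ≤ L := hL hx
    rw [Metric.mem_ball, lt_min_iff] at hy
    have h1 : (x, x) ∈ K := ⟨subset_closure hx, by rw [Metric.mem_closedBall]; linarith⟩
    have h2 : (x, y) ∈ K := ⟨subset_closure hx, by
      rw [Metric.mem_closedBall]; linarith [dist_triangle y x 0]⟩
    have h3 := h _ h1 _ h2 (by
      rw [Prod.dist_eq, dist_self, max_lt_iff, dist_comm]; exact ⟨hδ, hy.1.trans hδ'.2⟩)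
    rw [Real.dist_eq] at h3
    linarith [le_abs_self (p i (x, x) - p i (x, y))]
  obtain ⟨δ, h, hδ⟩ := (hev.and self_mem_nhdsWithin).exists
  exact ⟨min δ 1, lt_min hδ one_pos, min_le_right _ _, h⟩

/-- Pointwise gain of integrability. Optimizing the radius in `ball_avg` bounds `|φ(x)|` by a power
`N / ((s + N) q)` of `1 + slice`, where `q` is a lower bound of `p i (x, ·)` near `x`. The factor
`N / (s + N) < 1` is the gain, and pays for the difference between `q` and `p i (x, x)`. -/
lemma embed_pt (H : Setup Ω s Q p pM r m R P) (L : ℝ) :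
    ∃ C, 0 ≤ C ∧ ∀ φ, MX Ω s Q p pM φ → Integrable φ → ∫ x, |φ x| ≤ L →
      ∀ i, ∀ᵐ x ∂(volume.restrict Ω), |φ x| ^ p i (x, x) ≤ C * (1 + slice s (p i) φ x) := by
  have hs := H.hs
  have hm := H.hm
  have hN0 : (0 : ℝ) ≤ N := Nat.cast_nonneg _
  have hsN : 0 < s + N := by linarith
  obtain ⟨δ, hδ, hδ1, hpδ⟩ := H.exists_delta (ε := s / (s + N)) (by positivity)
  have hub := ub_pos (N := N)
  set c : ℝ := δ ^ (-(N : ℝ)) * ((ub N + 1 + L) / ub N) with hc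
  set C1 : ℝ := max 1 c with hC1
  have hC11 : 1 ≤ C1 := le_max_left _ _
  have hC10 : 0 < C1 := by linarith
  refine ⟨C1 ^ P, by positivity, fun φ hφ hφi hL i => ?_⟩
  filter_upwards [(H.slice_props hφ i).1, ae_restrict_mem H.ho.measurableSet] with x hsl hxΩ
  set F := slice s (p i) φ x with hF
  have hF0 : 0 ≤ F := slice_nonneg x i
  obtain ⟨hp1, hp2⟩ := H.bd i (y := x) hxΩ
  set e := p i (x, x) with he
  have hε1 : s / (s + N) ≤ 1 := by rw [div_le_one hsN]; linarith
  set q := e - s / (s + N) with hq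
  have hq0 : 0 < q := by linarith
  set A : ℝ := (1 + F) ^ (1 / q) with hA
  have hA1 : 1 ≤ A := Real.one_le_rpow (by linarith) (by positivity)
  have hA0 : 0 < A := by linarith
  have hAq : A ^ q = 1 + F := by
    rw [hA, ← Real.rpow_mul (by linarith), one_div_mul_cancel hq0.ne', Real.rpow_one]
  have hAF : A ^ (1 - q) * F ≤ A := by
    calc A ^ (1 - q) * F ≤ A ^ (1 - q) * A ^ q := by
          rw [hAq]; gcongr; linarith
      _ = A := by rw [← Real.rpow_add hA0]; simp
  -- The radius balancing the oscillation term against the `L¹` term.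
  set ρ : ℝ := δ * A ^ (-(1 / (s + N))) with hρ
  have hρ0 : 0 < ρ := by positivity
  have hρδ : ρ ≤ δ := by
    have : A ^ (-(1 / (s + N))) ≤ 1 :=
      Real.rpow_le_one_of_one_le_of_nonpos hA1 (by rw [neg_nonpos]; positivity)
    nlinarith
  have hρsN : ρ ^ (s + N) * A ≤ 1 := by
    rw [hρ, Real.mul_rpow hδ.le (by positivity), ← Real.rpow_mul hA0.le, neg_mul,
      one_div_mul_cancel hsN.ne', Real.rpow_neg_one, mul_assoc, inv_mul_cancel₀ hA0.ne', mul_one]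
    exact Real.rpow_le_one hδ.le hδ1 hsN.le
  have havg := H.ball_avg hxΩ hφi i hsl hρ0 hA1 (q := q)
    fun y hy => hpδ i x hxΩ y (Metric.ball_subset_ball hρδ hy)
  have hfin : IsFiniteMeasure (volume.restrict (Metric.ball x ρ)) :=
    ⟨by rw [Measure.restrict_apply_univ]; exact measure_ball_lt_top⟩
  have hi1 : Integrable (fun y => |φ x - φ y|) (volume.restrict (Metric.ball x ρ)) :=
    ((integrable_const _).sub hφi.integrableOn).abs
  have hi2 : Integrable (fun y => |φ y|) (volume.restrict (Metric.ball x ρ)) :=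
    hφi.abs.integrableOn
  have h1 : ρ ^ (N : ℝ) * ub N * |φ x| ≤ ub N + 1 + L := by
    calc ρ ^ (N : ℝ) * ub N * |φ x| = ∫ y in Metric.ball x ρ, |φ x| := by
          rw [setIntegral_const, H.vol_ball x hρ0.le, smul_eq_mul]
      _ ≤ ∫ y in Metric.ball x ρ, (|φ x - φ y| + |φ y|) := by
          refine integral_mono (integrable_const _) (hi1.add hi2) fun y => ?_
          have := abs_add_le (φ x - φ y) (φ y)
          simpa using this
      _ = (∫ y in Metric.ball x ρ, |φ x - φ y|) + ∫ y in Metric.ball x ρ, |φ y| :=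
          integral_add hi1 hi2
      _ ≤ ρ ^ (s + N) * (ub N * A + A) + L := by
          refine add_le_add (havg.trans ?_) ?_
          · gcongr
          · exact (setIntegral_le_integral hφi.abs (ae_of_all _ fun _ => abs_nonneg _)).trans hL
      _ = (ub N + 1) * (ρ ^ (s + N) * A) + L := by ring
      _ ≤ _ := by nlinarith
  have hρN : 0 < ρ ^ (N : ℝ) := by positivity
  have h2 : |φ x| ≤ C1 * A ^ (N / (s + N)) := by
    calc |φ x| ≤ (ub N + 1 + L) / (ρ ^ (N : ℝ) * ub N) := by
          rw [le_div_iff₀ (by positivity)]; linarith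
      _ = c * A ^ (N / (s + N)) := by
          have h5 : A ^ ((N : ℝ) / (s + N)) = (A ^ (-(1 / (s + N)) * (N : ℝ)))⁻¹ := by
            rw [← Real.rpow_neg hA0.le]; congr 1; ring
          rw [hc, hρ, Real.mul_rpow hδ.le (by positivity), ← Real.rpow_mul hA0.le, h5,
            Real.rpow_neg hδ.le]
          have : 0 < A ^ (-(1 / (s + N)) * (N : ℝ)) := by positivity
          have : 0 < δ ^ (N : ℝ) := by positivity
          field_simp
      _ ≤ _ := by
          gcongr
          exact le_max_right _ _
  calc |φ x| ^ e ≤ (C1 * A ^ (N / (s + N))) ^ e :=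
        Real.rpow_le_rpow (abs_nonneg _) h2 (by linarith)
    _ = C1 ^ e * A ^ (N / (s + N) * e) := by
        rw [Real.mul_rpow hC10.le (by positivity), ← Real.rpow_mul hA0.le]
    _ ≤ C1 ^ P * A ^ q := by
        refine mul_le_mul (Real.rpow_le_rpow_of_exponent_le hC11 hp2)
          (Real.rpow_le_rpow_of_exponent_le hA1 ?_) (by positivity) (by positivity)
        have h6 : q - N / (s + N) * e = s * (e - 1) / (s + N) := by
          rw [hq]; field_simp; ring
        have h7 : 0 ≤ s * (e - 1) / (s + N) :=
          div_nonneg (mul_nonneg hs.le (by linarith)) hsN.le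
        linarith
    _ = C1 ^ P * (1 + F) := by rw [hAq]

/-- Bounded Gagliardo modulars give a bounded modular in `L^{p_M(x)}(Ω)`. -/
lemma embed (H : Setup Ω s Q p pM r m R P) (B : ℝ) :
    ∃ C, 0 ≤ C ∧ ∀ φ, MX Ω s Q p pM φ → (∀ i, gmod Q s (p i) φ ≤ B) → omod Ω pM φ ≤ C := by
  have := H.finΩ
  have hne := H.i0
  obtain ⟨i0⟩ := H.i0
  obtain ⟨C0, hC0, h0⟩ := H.l1_bound
  obtain ⟨C, hC, h⟩ := H.embed_pt (C0 * (1 + B))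
  refine ⟨max 0 (∑ _i : Fin N, C * (volume.real Ω + B)), le_max_left _ _, fun φ hφ hB => ?_⟩
  refine le_trans ?_ (le_max_right _ _)
  obtain ⟨hi, hl⟩ := h0 φ hφ
  have hL : ∫ x, |φ x| ≤ C0 * (1 + B) :=
    (hl i0).trans (mul_le_mul_of_nonneg_left (by linarith [hB i0]) hC0)
  have hpt := ae_all_iff.mpr (h φ hφ hi hL)
  have hint : ∀ i, Integrable (fun x => C * (1 + slice s (p i) φ x)) (volume.restrict Ω) :=
    fun i => ((integrable_const _).add (H.slice_props hφ i).2.1).const_mul C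
  calc omod Ω pM φ ≤ ∫ x in Ω, ∑ i, C * (1 + slice s (p i) φ x) := by
        refine integral_mono_ae hφ.om.int (integrable_finsetSum _ fun i _ => hint i) ?_
        filter_upwards [hpt] with x hx
        obtain ⟨i, hiM⟩ := exists_eq_ciSup_of_finite (f := fun i => p i (x, x))
        simp only [div_one, H.hpM x, ← hiM]
        refine (hx i).trans (Finset.single_le_sum (f := fun i => C * (1 + slice s (p i) φ x))
          (fun j _ => ?_) (Finset.mem_univ i))
        have := slice_nonneg (s := s) (p := p) (φ := φ) x j
        positivity
    _ = ∑ i, ∫ x in Ω, C * (1 + slice s (p i) φ x) := integral_finsetSum _ fun i _ => hint i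
    _ ≤ ∑ _i : Fin N, C * (volume.real Ω + B) := by
        refine Finset.sum_le_sum fun i _ => ?_
        rw [integral_const_mul, integral_add (integrable_const _) (H.slice_props hφ i).2.1,
          setIntegral_const, smul_eq_mul, mul_one]
        gcongr
        exact (H.slice_props hφ i).2.2.trans (hB i)

end Setup

end

/-! ### Compactness in `L¹` -/

section

variable {N : ℕ} {Ω : Set (Euc N)} {s : ℝ} {Q : Set (Euc N × Euc N)}
  {p : Fin N → Euc N × Euc N → ℝ} {pM r : Euc N → ℝ} {m R P : ℝ} {φ ψ : Euc N → ℝ}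

/-- The tent kernel of radius `ρ`, not normalized. -/
def tent (ρ : ℝ) (x y : Euc N) : ℝ := max 0 (1 - ‖x - y‖ / ρ)

/-- Local averages against the tent kernel. -/
def tavg (ρ : ℝ) (φ : Euc N → ℝ) (x : Euc N) : ℝ := ∫ y, tent ρ x y * φ y

lemma tent_nonneg (ρ : ℝ) (x y : Euc N) : 0 ≤ tent ρ x y := le_max_left _ _

lemma tent_le_one {ρ : ℝ} (hρ : 0 < ρ) (x y : Euc N) : tent ρ x y ≤ 1 :=
  max_le zero_le_one (by have : 0 ≤ ‖x - y‖ / ρ := by positivity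
                         linarith)

lemma tent_cont (ρ : ℝ) (x : Euc N) : Continuous (tent ρ x) := by
  unfold tent; fun_prop

lemma tent_eq_zero {ρ : ℝ} (hρ : 0 < ρ) {x y : Euc N} (h : y ∉ Metric.ball x ρ) :
    tent ρ x y = 0 := by
  rw [Metric.mem_ball, dist_comm, dist_eq_norm, not_lt] at h
  exact max_eq_left (by rw [sub_nonpos, one_le_div hρ]; exact h)

lemma tent_lip {ρ : ℝ} (hρ : 0 < ρ) (x x' y : Euc N) :
    |tent ρ x y - tent ρ x' y| ≤ ‖x - x'‖ / ρ := by
  refine (?_ : _ ≤ |(1 - ‖x - y‖ / ρ) - (1 - ‖x' - y‖ / ρ)|).trans ?_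
  · unfold tent
    have := abs_max_sub_max_le_abs (1 - ‖x - y‖ / ρ) (1 - ‖x' - y‖ / ρ) 0
    rwa [max_comm 0, max_comm 0]
  · rw [show (1 - ‖x - y‖ / ρ) - (1 - ‖x' - y‖ / ρ) = -((‖x - y‖ - ‖x' - y‖) / ρ) by ring,
      abs_neg, abs_div, abs_of_pos hρ]
    gcongr
    refine (abs_norm_sub_norm_le _ _).trans (le_of_eq ?_)
    congr 1; abel

lemma tent_mul_integrable {ρ : ℝ} (hρ : 0 < ρ) (x : Euc N) (hφ : Integrable φ) :
    Integrable (fun y => tent ρ x y * φ y) := by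
  refine hφ.abs.mono' ((tent_cont ρ x).aestronglyMeasurable.mul hφ.1) (ae_of_all _ fun y => ?_)
  rw [norm_mul, Real.norm_of_nonneg (tent_nonneg _ _ _), Real.norm_eq_abs]
  exact mul_le_of_le_one_left (abs_nonneg _) (tent_le_one hρ _ _)

lemma tavg_bound {ρ : ℝ} (hρ : 0 < ρ) (x : Euc N) (hφ : Integrable φ) :
    |tavg ρ φ x| ≤ ∫ y, |φ y| := by
  rw [← Real.norm_eq_abs, tavg]
  refine norm_integral_le_of_norm_le hφ.abs (ae_of_all _ fun y => ?_)
  rw [norm_mul, Real.norm_of_nonneg (tent_nonneg _ _ _), Real.norm_eq_abs]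
  exact mul_le_of_le_one_left (abs_nonneg _) (tent_le_one hρ _ _)

lemma tavg_lip {ρ : ℝ} (hρ : 0 < ρ) (x x' : Euc N) (hφ : Integrable φ) :
    |tavg ρ φ x - tavg ρ φ x'| ≤ ‖x - x'‖ / ρ * ∫ y, |φ y| := by
  rw [tavg, tavg, ← integral_sub (tent_mul_integrable hρ x hφ) (tent_mul_integrable hρ x' hφ),
    ← integral_const_mul, ← Real.norm_eq_abs]
  refine norm_integral_le_of_norm_le (hφ.abs.const_mul _) (ae_of_all _ fun y => ?_)
  rw [← sub_mul, norm_mul, Real.norm_eq_abs, Real.norm_eq_abs]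
  exact mul_le_mul_of_nonneg_right (tent_lip hρ _ _ _) (abs_nonneg _)

lemma tavg_cont {ρ : ℝ} (hρ : 0 < ρ) (hφ : Integrable φ) : Continuous (tavg ρ φ) := by
  have h0 : 0 ≤ ∫ y, |φ y| := integral_nonneg fun _ => abs_nonneg _
  refine (LipschitzWith.of_dist_le_mul (K := ((∫ y, |φ y|) / ρ).toNNReal) fun x x' => ?_).continuous
  rw [Real.dist_eq, dist_eq_norm, Real.coe_toNNReal _ (by positivity)]
  refine (tavg_lip hρ x x' hφ).trans (le_of_eq ?_)
  ring

lemma tent_integrable {ρ : ℝ} (hρ : 0 < ρ) (x : Euc N) : Integrable (tent ρ x) := by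
  refine (tent_cont ρ x).integrable_of_hasCompactSupport ?_
  refine HasCompactSupport.intro (isCompact_closedBall x ρ) fun y hy => ?_
  exact tent_eq_zero hρ fun h => hy (Metric.ball_subset_closedBall h)

namespace Setup

lemma tent_mass (H : Setup Ω s Q p pM r m R P) {ρ : ℝ} (hρ : 0 < ρ) (x : Euc N) :
    ub N / 2 * (ρ / 2) ^ (N : ℝ) ≤ ∫ y, tent ρ x y := by
  have hfin : IsFiniteMeasure (volume.restrict (Metric.ball x (ρ / 2))) :=
    ⟨by rw [Measure.restrict_apply_univ]; exact measure_ball_lt_top⟩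
  calc ub N / 2 * (ρ / 2) ^ (N : ℝ) = ∫ y in Metric.ball x (ρ / 2), (1 / 2 : ℝ) := by
        rw [setIntegral_const, H.vol_ball x (by positivity), smul_eq_mul]; ring
    _ ≤ ∫ y in Metric.ball x (ρ / 2), tent ρ x y := by
        refine setIntegral_mono_on (integrable_const _) (tent_integrable hρ x).integrableOn
          measurableSet_ball fun y hy => ?_
        rw [Metric.mem_ball, dist_comm, dist_eq_norm] at hy
        refine le_trans ?_ (le_max_right _ _)
        have : ‖x - y‖ / ρ ≤ 1 / 2 := by rw [div_le_iff₀ hρ]; linarith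
        linarith
    _ ≤ _ := setIntegral_le_integral (tent_integrable hρ x) (ae_of_all _ fun _ => tent_nonneg _ _ _)

lemma tavg_sub_le {ρ : ℝ} (hρ : 0 < ρ) (x : Euc N) (hφ : Integrable φ) :
    |(∫ y, tent ρ x y) * φ x - tavg ρ φ x| ≤ ∫ y in Metric.ball x ρ, |φ x - φ y| := by
  have hfin : IsFiniteMeasure (volume.restrict (Metric.ball x ρ)) :=
    ⟨by rw [Measure.restrict_apply_univ]; exact measure_ball_lt_top⟩
  have hi1 : Integrable (fun y => |φ x - φ y|) (volume.restrict (Metric.ball x ρ)) :=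
    ((integrable_const _).sub hφ.integrableOn).abs
  rw [tavg, ← integral_mul_const, ← integral_sub ((tent_integrable hρ x).mul_const _)
    (tent_mul_integrable hρ x hφ), ← integral_indicator measurableSet_ball, ← Real.norm_eq_abs]
  refine norm_integral_le_of_norm_le (IntegrableOn.integrable_indicator hi1 measurableSet_ball)
    (ae_of_all _ fun y => ?_)
  by_cases hy : y ∈ Metric.ball x ρ
  · rw [Set.indicator_of_mem hy, ← mul_sub, norm_mul, Real.norm_of_nonneg (tent_nonneg _ _ _),
      Real.norm_eq_abs]
    exact mul_le_of_le_one_left (abs_nonneg _) (tent_le_one hρ _ _)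
  · rw [Set.indicator_of_notMem hy, tent_eq_zero hρ hy]; simp

/-- The `L¹` distance of two functions of bounded modular is controlled, up to `O(ρ^s)`, by the
distance of their averages at scale `ρ`. -/
lemma l1_dist_le (H : Setup Ω s Q p pM r m R P) (B : ℝ) :
    ∃ C, 0 ≤ C ∧ ∀ φ ψ, MX Ω s Q p pM φ → MX Ω s Q p pM ψ →
      (∀ i, gmod Q s (p i) φ ≤ B) → (∀ i, gmod Q s (p i) ψ ≤ B) → ∀ ρ, 0 < ρ →
      ∫ x, |φ x - ψ x| ≤ C * ρ ^ s +
        C * ρ ^ (-(N : ℝ)) * ∫ x in Ω, |tavg ρ φ x - tavg ρ ψ x| := by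
  have := H.finΩ
  obtain ⟨i⟩ := H.i0
  obtain ⟨C0, hC0, h0⟩ := H.l1_bound
  have hub := ub_pos (N := N)
  have hm := H.hm
  set κ : ℝ := ub N / 2 * (1 / 2) ^ (N : ℝ) with hκ
  have hκ0 : 0 < κ := by positivity
  set E : ℝ := 2 * |volume.real Ω * ub N + B| + 1 with hE
  have hE1 : 1 ≤ E := by rw [hE]; linarith [abs_nonneg (volume.real Ω * ub N + B)]
  refine ⟨E / κ, by positivity, fun φ ψ hφ hψ hBφ hBψ ρ hρ => ?_⟩
  obtain ⟨hφi, -⟩ := h0 φ hφ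
  obtain ⟨hψi, -⟩ := h0 ψ hψ
  obtain ⟨sφ1, sφ2, sφ3⟩ := H.slice_props hφ i
  obtain ⟨sψ1, sψ2, sψ3⟩ := H.slice_props hψ i
  have hρN : 0 < ρ ^ (N : ℝ) := by positivity
  have hg : Integrable (fun x => |tavg ρ φ x - tavg ρ ψ x|) (volume.restrict Ω) := by
    refine (integrable_const ((∫ y, |φ y|) + ∫ y, |ψ y|)).mono'
      ((tavg_cont hρ hφi).sub (tavg_cont hρ hψi)).abs.aestronglyMeasurable (ae_of_all _ fun x => ?_)
    rw [Real.norm_eq_abs, abs_abs]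
    exact (abs_sub _ _).trans (add_le_add (tavg_bound hρ x hφi) (tavg_bound hρ x hψi))
  have hpt : ∀ᵐ x ∂(volume.restrict Ω), κ * ρ ^ (N : ℝ) * |φ x - ψ x| ≤
      ρ ^ (s + N) * ((ub N + slice s (p i) φ x) + (ub N + slice s (p i) ψ x)) +
        |tavg ρ φ x - tavg ρ ψ x| := by
    filter_upwards [sφ1, sψ1, ae_restrict_mem H.ho.measurableSet] with x h1 h2 hx
    have hq : ∀ y ∈ Metric.ball x ρ, (0 : ℝ) ≤ p i (x, y) := fun y _ => by
      linarith [(H.bd i (y := y) hx).1]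
    have a1 := (tavg_sub_le hρ x hφi).trans (H.ball_avg hx hφi i h1 hρ le_rfl hq)
    have a2 := (tavg_sub_le hρ x hψi).trans (H.ball_avg hx hψi i h2 hρ le_rfl hq)
    rw [Real.one_rpow, mul_one, one_mul] at a1 a2
    have hM := H.tent_mass hρ x
    set M := ∫ y, tent ρ x y
    have hM' : κ * ρ ^ (N : ℝ) ≤ M := by
      refine le_trans (le_of_eq ?_) hM
      rw [hκ, div_eq_mul_one_div ρ 2, Real.mul_rpow hρ.le (by norm_num)]; ring
    have hM0 : 0 ≤ M := le_trans (by positivity) hM'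
    calc κ * ρ ^ (N : ℝ) * |φ x - ψ x| ≤ M * |φ x - ψ x| := by gcongr
      _ = |(M * φ x - tavg ρ φ x) - (M * ψ x - tavg ρ ψ x) + (tavg ρ φ x - tavg ρ ψ x)| := by
          rw [show (M * φ x - tavg ρ φ x) - (M * ψ x - tavg ρ ψ x) + (tavg ρ φ x - tavg ρ ψ x)
            = M * (φ x - ψ x) by ring, abs_mul, abs_of_nonneg hM0]
      _ ≤ |M * φ x - tavg ρ φ x| + |M * ψ x - tavg ρ ψ x| + |tavg ρ φ x - tavg ρ ψ x| :=
          (abs_add_le _ _).trans (by gcongr; exact abs_sub _ _)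
      _ ≤ _ := by rw [mul_add]; gcongr
  have j1 : Integrable (fun x => ub N + slice s (p i) φ x) (volume.restrict Ω) :=
    (integrable_const _).add sφ2
  have j2 : Integrable (fun x => ub N + slice s (p i) ψ x) (volume.restrict Ω) :=
    (integrable_const _).add sψ2
  have j12 : Integrable (fun x => (ub N + slice s (p i) φ x) + (ub N + slice s (p i) ψ x))
      (volume.restrict Ω) := j1.add j2
  have hint := integral_mono_ae (((hφi.sub hψi).abs.integrableOn (s := Ω)).const_mul
    (κ * ρ ^ (N : ℝ))) ((j12.const_mul (ρ ^ (s + N))).add hg) hpt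
  simp only [Pi.add_apply, Pi.sub_apply] at hint
  rw [integral_const_mul, integral_add (j12.const_mul (ρ ^ (s + N))) hg,
    integral_const_mul, integral_add j1 j2, integral_add (integrable_const _) sφ2,
    integral_add (integrable_const _) sψ2, setIntegral_const, smul_eq_mul] at hint
  have hfull : ∫ x, |φ x - ψ x| = ∫ x in Ω, |φ x - ψ x| := by
    refine (setIntegral_eq_integral_of_ae_compl_eq_zero ?_).symm
    filter_upwards [hφ.zero, hψ.zero] with x h1 h2 hx
    rw [h1 hx, h2 hx, sub_zero, abs_zero]
  rw [hfull]
  set I := ∫ x in Ω, |φ x - ψ x|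
  set T := ∫ x in Ω, |tavg ρ φ x - tavg ρ ψ x| with hT
  have hT0 : 0 ≤ T := integral_nonneg fun _ => abs_nonneg _
  have hE2 : volume.real Ω * ub N + (∫ x in Ω, slice s (p i) φ x) +
      (volume.real Ω * ub N + ∫ x in Ω, slice s (p i) ψ x) ≤ E := by
    have := le_abs_self (volume.real Ω * ub N + B)
    linarith [sφ3.trans (hBφ i), sψ3.trans (hBψ i)]
  have hfin : κ * ρ ^ (N : ℝ) * I ≤ ρ ^ (s + N) * E + E * T := by
    have h1 : ρ ^ (s + N) * (volume.real Ω * ub N + (∫ x in Ω, slice s (p i) φ x) +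
      (volume.real Ω * ub N + ∫ x in Ω, slice s (p i) ψ x)) ≤ ρ ^ (s + N) * E := by gcongr
    have h2 : T ≤ E * T := le_mul_of_one_le_left hT0 hE1
    linarith
  calc I ≤ (ρ ^ (s + N) * E + E * T) / (κ * ρ ^ (N : ℝ)) := by
        rw [le_div_iff₀ (by positivity)]; linarith
    _ = _ := by
        rw [Real.rpow_add hρ, Real.rpow_neg hρ.le]
        field_simp

/-- Rellich-type compactness: sequences of bounded modular have subsequences that are Cauchy
in `L¹`. A diagonal argument makes all averages at scales `1 / (j + 1)` converge. -/
lemma compact_l1 (H : Setup Ω s Q p pM r m R P) {w : ℕ → Euc N → ℝ}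
    (hw : ∀ n, MX Ω s Q p pM (w n)) {B : ℝ} (hB : ∀ n i, gmod Q s (p i) (w n) ≤ B) :
    ∃ σ : ℕ → ℕ, StrictMono σ ∧ ∀ ε > 0, ∃ k0, ∀ j ≥ k0, ∀ k ≥ k0,
      ∫ x, |w (σ j) x - w (σ k) x| ≤ ε := by
  have := H.finΩ
  obtain ⟨i⟩ := H.i0
  have hs := H.hs
  obtain ⟨C0, hC0, h0⟩ := H.l1_bound
  obtain ⟨C, hC, hdist⟩ := H.l1_dist_le B
  have hwi : ∀ n, Integrable (w n) := fun n => (h0 _ (hw n)).1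
  set L : ℝ := C0 * (1 + B) with hLdef
  have hL : ∀ n, ∫ x, |w n x| ≤ L := fun n => ((h0 _ (hw n)).2 i).trans
    (mul_le_mul_of_nonneg_left (by linarith [hB n i]) hC0)
  have hL0 : 0 ≤ L := (integral_nonneg fun _ => abs_nonneg _).trans (hL 0)
  set ρ : ℕ → ℝ := fun j => 1 / ((j : ℝ) + 1) with hρdef
  have hρ : ∀ j, 0 < ρ j := fun j => by positivity
  set X : ℕ → Euc N := TopologicalSpace.denseSeq (Euc N)
  have hcpt : IsSeqCompact (Set.univ.pi fun _ : ℕ × ℕ => Set.Icc (-L) L) :=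
    (isCompact_univ_pi fun _ => isCompact_Icc).isSeqCompact
  obtain ⟨g, -, σ, hσ, hlim⟩ := hcpt (x := fun n (a : ℕ × ℕ) => tavg (ρ a.1) (w n) (X a.2))
    fun n a _ => abs_le.mp ((tavg_bound (hρ _) _ (hwi n)).trans (hL n))
  rw [tendsto_pi_nhds] at hlim
  refine ⟨σ, hσ, ?_⟩
  -- Equi-Lipschitz continuity upgrades convergence on the dense sequence to convergence everywhere.
  have hconv : ∀ j x, ∃ l, Tendsto (fun n => tavg (ρ j) (w (σ n)) x) atTop (𝓝 l) := by
    intro j x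
    refine cauchySeq_tendsto_of_complete (Metric.cauchySeq_iff'.mpr fun ε hε => ?_)
    obtain ⟨k, hk⟩ := (TopologicalSpace.denseRange_denseSeq (Euc N)).exists_dist_lt x
      (ε := ε * ρ j / (4 * (L + 1))) (by have := hρ j; positivity)
    have hc : CauchySeq fun n => tavg (ρ j) (w (σ n)) (X k) := (hlim (j, k)).cauchySeq
    obtain ⟨M, hM⟩ := Metric.cauchySeq_iff'.mp hc (ε / 2) (by positivity)
    refine ⟨M, fun n hn => ?_⟩
    have hlip : ∀ n, |tavg (ρ j) (w (σ n)) x - tavg (ρ j) (w (σ n)) (X k)| < ε / 4 := by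
      intro n
      have hk' : ‖x - X k‖ < ε * ρ j / (4 * (L + 1)) := by rw [← dist_eq_norm]; exact hk
      calc _ ≤ ‖x - X k‖ / ρ j * ∫ y, |w (σ n) y| := tavg_lip (hρ j) _ _ (hwi _)
        _ ≤ ‖x - X k‖ / ρ j * (L + 1) := by
            have := hρ j
            gcongr
            linarith [hL (σ n)]
        _ < (ε * ρ j / (4 * (L + 1))) / ρ j * (L + 1) := by
            have := hρ j
            gcongr
        _ = ε / 4 := by have := (hρ j).ne'; field_simp
    have h1 := hM n hn
    rw [Real.dist_eq] at h1 ⊢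
    have h2 := hlip n
    have h3 := hlip M
    rw [abs_lt] at *
    constructor <;> linarith [h1.1, h1.2, h2.1, h2.2, h3.1, h3.2]
  choose gl hgl using hconv
  have hgL : ∀ j x n, |tavg (ρ j) (w (σ n)) x| ≤ L :=
    fun j x n => (tavg_bound (hρ j) x (hwi _)).trans (hL _)
  have hglm : ∀ j, Measurable (gl j) := fun j =>
    measurable_of_tendsto_metrizable (fun n => (tavg_cont (hρ j) (hwi (σ n))).measurable)
      (tendsto_pi_nhds.mpr (hgl j))
  have hglL : ∀ j x, |gl j x| ≤ L := fun j x =>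
    le_of_tendsto (hgl j x).abs (Eventually.of_forall (hgL j x))
  have hTi : ∀ j n, Integrable (fun x => |tavg (ρ j) (w (σ n)) x - gl j x|)
      (volume.restrict Ω) := fun j n => by
    refine (integrable_const (L + L)).mono'
      (((tavg_cont (hρ j) (hwi _)).measurable.sub (hglm j)).abs.aestronglyMeasurable)
      (ae_of_all _ fun x => ?_)
    rw [Real.norm_eq_abs, abs_abs]
    exact (abs_sub _ _).trans (add_le_add (hgL j x n) (hglL j x))
  have hT : ∀ j, Tendsto (fun n => ∫ x in Ω, |tavg (ρ j) (w (σ n)) x - gl j x|) atTop (𝓝 0) := by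
    intro j
    rw [show (0 : ℝ) = ∫ x in Ω, (0 : ℝ) by simp]
    refine tendsto_integral_of_dominated_convergence (fun _ => L + L)
      (fun n => (hTi j n).1) (integrable_const _) (fun n => ae_of_all _ fun x => ?_)
      (ae_of_all _ fun x => ?_)
    · rw [Real.norm_eq_abs, abs_abs]
      exact (abs_sub _ _).trans (add_le_add (hgL j x n) (hglL j x))
    · have := ((hgl j x).sub_const (gl j x)).abs
      rwa [sub_self, abs_zero] at this
  intro ε hε
  have hρs : Tendsto (fun j => C * ρ j ^ s) atTop (𝓝 0) := by
    have h1 : Tendsto ρ atTop (𝓝 0) := tendsto_one_div_add_atTop_nhds_zero_nat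
    have h2 := (h1.rpow_const (p := s) (Or.inr hs.le)).const_mul C
    rwa [Real.zero_rpow hs.ne', mul_zero] at h2
  obtain ⟨j0, hj0⟩ := (hρs.eventually (ge_mem_nhds (half_pos hε))).exists
  set D := C * ρ j0 ^ (-(N : ℝ)) with hD
  have hD0 : 0 ≤ D := mul_nonneg hC (Real.rpow_nonneg (hρ j0).le _)
  have hη : 0 < ε / (4 * (D + 1)) := by positivity
  obtain ⟨k0, hk0⟩ := eventually_atTop.mp ((hT j0).eventually (ge_mem_nhds hη))
  refine ⟨k0, fun j hj k hk => (hdist _ _ (hw _) (hw _) (hB _) (hB _) (ρ j0) (hρ j0)).trans ?_⟩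
  have htri : ∫ x in Ω, |tavg (ρ j0) (w (σ j)) x - tavg (ρ j0) (w (σ k)) x| ≤
      ε / (4 * (D + 1)) + ε / (4 * (D + 1)) := by
    refine le_trans ?_ (add_le_add (hk0 j hj) (hk0 k hk))
    rw [← integral_add (hTi j0 j) (hTi j0 k)]
    refine integral_mono_of_nonneg (ae_of_all _ fun _ => abs_nonneg _)
      ((hTi j0 j).add (hTi j0 k)) (ae_of_all _ fun x => ?_)
    simp only
    rw [abs_sub_comm (tavg (ρ j0) (w (σ k)) x)]
    exact abs_sub_le _ _ _
  have h5 : D * (ε / (4 * (D + 1)) + ε / (4 * (D + 1))) ≤ ε / 2 := by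
    rw [show D * (ε / (4 * (D + 1)) + ε / (4 * (D + 1))) = (D / (D + 1)) * (ε / 2) by
      field_simp; ring]
    exact mul_le_of_le_one_left (by positivity) (by rw [div_le_one (by positivity)]; linarith)
  have h6 := mul_le_mul_of_nonneg_left htri hD0
  linarith

end Setup

end

/-! ### The energy, its derivative, and the strong convergence -/

/-- The energy density with the factor `1 / e` is comparable to the modular. -/
lemma ModSpace.energy {α : Type*} [MeasurableSpace α] {μ : Measure α} {e d f : α → ℝ} {m P : ℝ}
    (H : ModSpace μ e d m P) (hf : FinMod μ e d f) :
    1 / P * modul μ e d f ≤ ∫ z, |f z| ^ e z / d z / e z ∂μ ∧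
      ∫ z, |f z| ^ e z / d z / e z ∂μ ≤ modul μ e d f := by
  have h1 := H.one_lt
  have hb : ∀ᵐ z ∂μ, 1 / P * (|f z| ^ e z / d z) ≤ |f z| ^ e z / d z / e z ∧
      |f z| ^ e z / d z / e z ≤ |f z| ^ e z / d z := by
    filter_upwards [H.bd] with z hz
    have h0 := H.term_nonneg f z
    constructor
    · rw [one_div_mul_eq_div]
      exact div_le_div_of_nonneg_left h0 (by linarith) hz.2
    · exact div_le_self h0 (by linarith)
  have hi : Integrable (fun z => |f z| ^ e z / d z / e z) μ := by
    refine hf.int.mono' ((H.aemeas_term hf.meas).div H.he).aestronglyMeasurable ?_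
    filter_upwards [hb, H.bd] with z hz hz2
    rw [Real.norm_of_nonneg (div_nonneg (H.term_nonneg f z) (by linarith))]
    exact hz.2
  rw [modul, ← integral_const_mul]
  exact ⟨integral_mono_ae (hf.int.const_mul _) hi (hb.mono fun _ h => h.1),
    integral_mono_ae hi hf.int (hb.mono fun _ h => h.2)⟩

section

variable {N : ℕ} {Ω : Set (Euc N)} {s : ℝ} {Q : Set (Euc N × Euc N)}
  {p : Fin N → Euc N × Euc N → ℝ} {pM r : Euc N → ℝ} {m R P : ℝ} {φ ψ u v : Euc N → ℝ}

namespace Setup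

lemma modR (H : Setup Ω s Q p pM r m R P) :
    ∃ a, ModSpace (volume.restrict Ω) r (fun _ => (1 : ℝ)) a R := by
  have hm : AEMeasurable r (volume.restrict Ω) :=
    (H.hrc.mono subset_closure).aemeasurable H.ho.measurableSet
  rcases Ω.eq_empty_or_nonempty with h | h
  · refine ⟨2, hm, aemeasurable_const, fun _ => zero_le_one, one_lt_two, ?_⟩
    rw [h, Measure.restrict_empty]; simp
  · obtain ⟨x0, hx0, hmin⟩ := H.hb.isCompact_closure.exists_isMinOn h.closure H.hrc
    refine ⟨r x0, hm, aemeasurable_const, fun _ => zero_le_one, (H.hr x0 hx0).1, ?_⟩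
    exact ae_restrict_of_forall_mem H.ho.measurableSet fun z hz =>
      ⟨hmin (subset_closure hz), (H.hr z (subset_closure hz)).2⟩

/-- The lower order term is finite, and dominated by a small multiple of the `p_M` modular. -/
lemma rmod (H : Setup Ω s Q p pM r m R P) (hφ : FinMod (volume.restrict Ω) pM (fun _ => 1) φ) :
    FinMod (volume.restrict Ω) r (fun _ => 1) φ ∧ ∀ K : ℝ, 1 ≤ K →
      modul (volume.restrict Ω) r (fun _ => 1) φ ≤
        K ^ R * volume.real Ω + K ^ (R - m) * omod Ω pM φ := by
  have := H.finΩ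
  obtain ⟨a, ha⟩ := H.modR
  have hb : ∀ K : ℝ, 1 ≤ K → ∀ᵐ x ∂(volume.restrict Ω), |φ x| ^ r x / 1 ≤
      K ^ R + K ^ (R - m) * (|φ x| ^ pM x / 1) := fun K hK => by
    filter_upwards [ae_restrict_mem H.ho.measurableSet] with x hx
    rw [div_one, div_one]
    obtain ⟨h1, h2⟩ := H.hr x (subset_closure hx)
    exact subcritical_split_self (abs_nonneg _) h1 h2 H.hR (H.pM_bd hx).1 hK
  have hi : ∀ K : ℝ, Integrable (fun x => K ^ R + K ^ (R - m) * (|φ x| ^ pM x / 1))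
      (volume.restrict Ω) := fun K => (integrable_const _).add (hφ.int.const_mul _)
  have hF : FinMod (volume.restrict Ω) r (fun _ => 1) φ := by
    refine ⟨hφ.meas, (hi 1).mono' (ha.aemeas_term hφ.meas).aestronglyMeasurable ?_⟩
    filter_upwards [hb 1 le_rfl] with x hx
    rw [Real.norm_of_nonneg (ha.term_nonneg φ x)]
    exact hx
  refine ⟨hF, fun K hK => ?_⟩
  calc modul (volume.restrict Ω) r (fun _ => 1) φ
      ≤ ∫ x in Ω, (K ^ R + K ^ (R - m) * (|φ x| ^ pM x / 1)) :=
        integral_mono_ae hF.int (hi K) (hb K hK)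
    _ = _ := by
        rw [integral_add (integrable_const _) (hφ.int.const_mul _), integral_const_mul,
          setIntegral_const, smul_eq_mul, mul_comm (K ^ R)]
        rfl

lemma Jderiv_eq (lam : ℝ) : Jderiv Ω Q s p pM r lam u φ =
    (∑ i, pairing (volume.restrict Q) (p i) (gagW s (p i)) (diffF u) (diffF φ)) +
      pairing (volume.restrict Ω) pM (fun _ => 1) u φ -
      lam * pairing (volume.restrict Ω) r (fun _ => 1) u φ := by
  simp only [Jderiv, pairing, div_one]
  rfl

/-- The energy is coercive because `r < m`: sublevel sets have bounded modulars. -/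
lemma energy_bound (H : Setup Ω s Q p pM r m R P) (hP : 0 < P) {lam : ℝ} (hlam : 0 < lam) (A : ℝ) :
    ∃ B, ∀ φ, MX Ω s Q p pM φ → Jfun Ω Q s p pM r lam φ ≤ A → ∀ i, gmod Q s (p i) φ ≤ B := by
  obtain ⟨a, ha⟩ := H.modR
  obtain ⟨K, hK1, hK⟩ := exists_rpow_small (β := R - m) (ε := 1 / (P * lam))
    (by linarith [H.hR]) (by positivity)
  refine ⟨P * (A + lam * (K ^ R * volume.real Ω)), fun φ hφ hA i => ?_⟩
  have hQe : ∀ j, 1 / P * gmod Q s (p j) φ ≤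
      ∫ z in Q, |φ z.1 - φ z.2| ^ p j z / ‖z.1 - z.2‖ ^ (s * p j z + N) / p j z :=
    fun j => ((H.modQ j).energy (hφ.gm j)).1
  have hΩe := (H.modΩ.energy hφ.om).1
  have hre := (ha.energy (H.rmod hφ.om).1).2.trans ((H.rmod hφ.om).2 K hK1)
  simp only [div_one] at hΩe hre
  have ho := H.modΩ.modul_nonneg φ
  have hsum : 1 / P * gmod Q s (p i) φ ≤ ∑ j, ∫ z in Q,
      |φ z.1 - φ z.2| ^ p j z / ‖z.1 - z.2‖ ^ (s * p j z + N) / p j z :=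
    (hQe i).trans (Finset.single_le_sum (f := fun j => ∫ z in Q,
      |φ z.1 - φ z.2| ^ p j z / ‖z.1 - z.2‖ ^ (s * p j z + N) / p j z) (fun j _ =>
        le_trans (mul_nonneg (by positivity) ((H.modQ j).modul_nonneg _)) (hQe j))
        (Finset.mem_univ i))
  have h3 : lam * (K ^ (R - m) * omod Ω pM φ) ≤ 1 / P * omod Ω pM φ := by
    rw [← mul_assoc]
    refine mul_le_mul_of_nonneg_right ?_ ho
    calc lam * K ^ (R - m) ≤ lam * (1 / (P * lam)) := by gcongr
      _ = 1 / P := by field_simp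
  have h4 := mul_le_mul_of_nonneg_left hre hlam.le
  have hΩe' : 1 / P * omod Ω pM φ ≤ ∫ x in Ω, |φ x| ^ pM x / pM x := hΩe
  unfold Jfun at hA
  have h5 : 1 / P * gmod Q s (p i) φ ≤ A + lam * (K ^ R * volume.real Ω) := by
    rw [mul_add] at h4
    linarith
  rw [one_div_mul_eq_div, div_le_iff₀ hP] at h5
  linarith

lemma gmod_le_of_WSeminorm (H : Setup Ω s Q p pM r m R P) (hφ : MX Ω s Q p pM φ)
    (h : WSeminorm Q s p φ ≤ 1) (i) : gmod Q s (p i) φ ≤ 2 ^ P := by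
  refine (H.modQ i).modul_le_of_lux_le (hφ.gm i) (le_trans ?_ h)
  exact Finset.single_le_sum (f := fun j => gagSemi Q s (p j) φ) (fun j _ => lux_nonneg)
    (Finset.mem_univ i)

/-- The set whose supremum is the dual norm of the derivative is bounded, so that the real
supremum is not a junk value. -/
lemma deriv_bdd (H : Setup Ω s Q p pM r m R P) {lam : ℝ} (hlam : 0 < lam)
    (hu : MX Ω s Q p pM u) :
    BddAbove {y : ℝ | ∃ φ : Euc N → ℝ, memX0 Ω Q s p pM φ ∧
        WSeminorm Q s p φ ≤ 1 ∧ y = |Jderiv Ω Q s p pM r lam u φ|} := by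
  obtain ⟨a, ha⟩ := H.modR
  obtain ⟨C, hC, hemb⟩ := H.embed (2 ^ P)
  set U := modul (volume.restrict Ω) r (fun _ => 1) u with hU
  refine ⟨(∑ i, (gmod Q s (p i) u + 2 ^ P)) + (omod Ω pM u + C) +
    lam * (U + (volume.real Ω + C)), ?_⟩
  rintro y ⟨φ, hφ, hφ1, rfl⟩
  rw [H.memX0_iff] at hφ
  have hg := H.gmod_le_of_WSeminorm hφ hφ1
  have ho := hemb φ hφ hg
  have hr := (H.rmod hφ.om).2 1 le_rfl
  rw [Real.one_rpow, Real.one_rpow, one_mul, one_mul] at hr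
  rw [Jderiv_eq]
  refine (abs_sub _ _).trans (add_le_add ((abs_add_le _ _).trans (add_le_add ?_ ?_)) ?_)
  · refine (Finset.abs_sum_le_sum_abs _ _).trans (Finset.sum_le_sum fun i _ => ?_)
    exact ((H.modQ i).abs_pairing_le (hu.gm i) (hφ.gm i)).trans (by
      have := hg i; unfold gmod at *; linarith)
  · exact (H.modΩ.abs_pairing_le hu.om hφ.om).trans (by unfold omod at *; linarith)
  · rw [abs_mul, abs_of_pos hlam]
    refine mul_le_mul_of_nonneg_left ?_ hlam.le
    exact (ha.abs_pairing_le (H.rmod hu.om).1 (H.rmod hφ.om).1).trans (by linarith)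

/-- The dual norm bounds the derivative in every direction of bounded modular, by homogeneity. -/
lemma deriv_le (H : Setup Ω s Q p pM r m R P) {lam : ℝ} (hlam : 0 < lam)
    (hu : MX Ω s Q p pM u) (hφ : MX Ω s Q p pM φ) {T : ℝ} (hT : 1 ≤ T)
    (hg : ∀ i, gmod Q s (p i) φ ≤ T) :
    |Jderiv Ω Q s p pM r lam u φ| ≤ N * T *
      sSup {y : ℝ | ∃ φ : Euc N → ℝ, memX0 Ω Q s p pM φ ∧
        WSeminorm Q s p φ ≤ 1 ∧ y = |Jderiv Ω Q s p pM r lam u φ|} := by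
  have hN : (1 : ℝ) ≤ N := by exact_mod_cast (by have := H.hN; omega : 1 ≤ N)
  have hN0 : (0 : ℝ) < N := by linarith
  have hT0 : 0 < T := by linarith
  set k : ℝ := 1 / (N * T) with hk
  have hk0 : 0 < k := by positivity
  have hk1 : k ≤ 1 := by
    rw [hk, div_le_one (by positivity)]; exact one_le_mul_of_one_le_of_one_le hN hT
  have hsc := fun i => (H.modQ i).lux_scaled_le (hφ.gm i) hN hT (hg i)
  have hM : MX Ω s Q p pM (fun x => k * φ x) := by
    refine ⟨hφ.meas.const_mul k, ⟨hφ.om.meas.const_mul k, ?_⟩, fun i => ?_, ?_⟩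
    · refine hφ.om.int.mono' (H.modΩ.aemeas_term (hφ.om.meas.const_mul k)).aestronglyMeasurable ?_
      filter_upwards [H.modΩ.bd] with x hx
      rw [Real.norm_of_nonneg (H.modΩ.term_nonneg (fun x => k * φ x) x), div_one, div_one, abs_mul,
        abs_of_pos hk0]
      exact Real.rpow_le_rpow (by positivity) (mul_le_of_le_one_left (abs_nonneg _) hk1)
        (by linarith [H.hm])
    · rw [diffF_const_mul]; exact (hsc i).1
    · filter_upwards [hφ.zero] with x h1 hx
      rw [h1 hx, mul_zero]
  have hW : WSeminorm Q s p (fun x => k * φ x) ≤ 1 := by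
    calc WSeminorm Q s p (fun x => k * φ x) ≤ ∑ _i : Fin N, 1 / (N : ℝ) := by
          refine Finset.sum_le_sum fun i _ => ?_
          rw [gagSemi_eq_lux, diffF_const_mul]
          exact (hsc i).2
      _ = 1 := by simp [hN0.ne']
  have hle := le_csSup (H.deriv_bdd hlam hu) ⟨_, H.memX0_iff.mpr hM, hW, rfl⟩
  have hhom : Jderiv Ω Q s p pM r lam u (fun x => k * φ x) =
      k * Jderiv Ω Q s p pM r lam u φ := by
    rw [Jderiv_eq, Jderiv_eq, diffF_const_mul]
    simp only [pairing_const_mul]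
    rw [← Finset.mul_sum]; ring
  rw [hhom, abs_mul, abs_of_pos hk0] at hle
  rwa [hk, one_div_mul_eq_div, div_le_iff₀ (by positivity), mul_comm] at hle

/-- The subcritical part of the derivative is small along pairs that are close in `L¹`. -/
lemma rpart_le (H : Setup Ω s Q p pM r m R P) (hu : MX Ω s Q p pM u) (hv : MX Ω s Q p pM v)
    {K : ℝ} (hK : 1 ≤ K) :
    |pairing (volume.restrict Ω) r (fun _ => 1) u (fun x => u x - v x)| ≤
      K ^ (R - 1) * (∫ x, |u x - v x|) + K ^ (R - m) * (2 ^ P * (omod Ω pM u + omod Ω pM v)) ∧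
    |pairing (volume.restrict Ω) r (fun _ => 1) v (fun x => u x - v x)| ≤
      K ^ (R - 1) * (∫ x, |u x - v x|) + K ^ (R - m) * (2 ^ P * (omod Ω pM u + omod Ω pM v)) := by
  obtain ⟨C, -, h1⟩ := H.l1_bound
  have hi : Integrable (fun x => |u x - v x|) := ((h1 u hu).1.sub (h1 v hv).1).abs
  have hK0 : 0 < K := by linarith
  have hpt : ∀ a : Euc N → ℝ, (∀ x, |a x| ≤ |u x| + |v x|) → ∀ᵐ x ∂(volume.restrict Ω),
      ‖|a x| ^ (r x - 2) * a x * (u x - v x) / 1‖ ≤ K ^ (R - 1) * |u x - v x| +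
        K ^ (R - m) * (2 ^ P * (|u x| ^ pM x / 1 + |v x| ^ pM x / 1)) := fun a ha => by
    filter_upwards [ae_restrict_mem H.ho.measurableSet] with x hx
    obtain ⟨hr1, hr2⟩ := H.hr x (subset_closure hx)
    obtain ⟨hp1, hp2⟩ := H.pM_bd hx
    have hm := H.hm
    rw [div_one, div_one, div_one, norm_mul, Real.norm_eq_abs, Real.norm_eq_abs,
      abs_dual_map _ hr1]
    calc |a x| ^ (r x - 1) * |u x - v x| ≤ (|u x| + |v x|) ^ (r x - 1) * |u x - v x| := by
          exact mul_le_mul_of_nonneg_right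
            (Real.rpow_le_rpow (abs_nonneg _) (ha x) (by linarith)) (abs_nonneg _)
      _ ≤ K ^ (R - 1) * |u x - v x| + K ^ (R - m) * (|u x| + |v x|) ^ pM x :=
          subcritical_split (abs_nonneg _) (abs_sub _ _) hr1 hr2 H.hR hp1 hK
      _ ≤ _ := by
          gcongr
          exact add_rpow_le (abs_nonneg _) (abs_nonneg _) (by linarith) hp2
  have hint : ∫ x in Ω, (K ^ (R - 1) * |u x - v x| +
        K ^ (R - m) * (2 ^ P * (|u x| ^ pM x / 1 + |v x| ^ pM x / 1))) ≤
      K ^ (R - 1) * (∫ x, |u x - v x|) +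
        K ^ (R - m) * (2 ^ P * (omod Ω pM u + omod Ω pM v)) := by
    have hs : Integrable (fun x => |u x| ^ pM x / 1 + |v x| ^ pM x / 1) (volume.restrict Ω) :=
      hu.om.int.add hv.om.int
    rw [integral_add (hi.integrableOn.const_mul _) ((hs.const_mul _).const_mul _),
      integral_const_mul, integral_const_mul, integral_const_mul,
      integral_add hu.om.int hv.om.int]
    refine add_le_add_left (mul_le_mul_of_nonneg_left ?_ (by positivity)) _
    exact setIntegral_le_integral hi (ae_of_all _ fun _ => abs_nonneg _)
  have hI : Integrable (fun x => K ^ (R - 1) * |u x - v x| +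
        K ^ (R - m) * (2 ^ P * (|u x| ^ pM x / 1 + |v x| ^ pM x / 1))) (volume.restrict Ω) :=
    (hi.integrableOn.const_mul _).add (((hu.om.int.add hv.om.int).const_mul _).const_mul _)
  exact ⟨(norm_integral_le_of_norm_le hI (hpt u fun x => by linarith [abs_nonneg (v x)])).trans
    hint, (norm_integral_le_of_norm_le hI
      (hpt v fun x => by linarith [abs_nonneg (u x)])).trans hint⟩

/-- Each monotone Gagliardo term is bounded by the derivatives and the lower order part, since all
the other terms of `⟨J'(u) - J'(v), u - v⟩` from the principal part are nonnegative. -/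
lemma mono_le (H : Setup Ω s Q p pM r m R P) {lam : ℝ} (hlam : 0 < lam)
    (hu : MX Ω s Q p pM u) (hv : MX Ω s Q p pM v) (i) :
    pairing (volume.restrict Q) (p i) (gagW s (p i)) (diffF u) (fun z => diffF u z - diffF v z) -
      pairing (volume.restrict Q) (p i) (gagW s (p i)) (diffF v)
        (fun z => diffF u z - diffF v z) ≤
    |Jderiv Ω Q s p pM r lam u (fun x => u x - v x)| +
      |Jderiv Ω Q s p pM r lam v (fun x => u x - v x)| +
      lam * (|pairing (volume.restrict Ω) r (fun _ => 1) u (fun x => u x - v x)| +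
        |pairing (volume.restrict Ω) r (fun _ => 1) v (fun x => u x - v x)|) := by
  have hmon := fun j => ((H.modQ j).modul_sub_le_mono (hu.gm j) (hv.gm j) one_pos le_rfl).1
  have hΩ := (H.modΩ.modul_sub_le_mono hu.om hv.om one_pos le_rfl).1
  have hs := Finset.single_le_sum (f := fun j =>
    pairing (volume.restrict Q) (p j) (gagW s (p j)) (diffF u) (fun z => diffF u z - diffF v z) -
      pairing (volume.restrict Q) (p j) (gagW s (p j)) (diffF v)
        (fun z => diffF u z - diffF v z)) (fun j _ => hmon j) (Finset.mem_univ i)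
  rw [Finset.sum_sub_distrib] at hs
  have e1 := Jderiv_eq (Ω := Ω) (Q := Q) (s := s) (p := p) (pM := pM) (r := r) (u := u)
    (φ := fun x => u x - v x) lam
  have e2 := Jderiv_eq (Ω := Ω) (Q := Q) (s := s) (p := p) (pM := pM) (r := r) (u := v)
    (φ := fun x => u x - v x) lam
  rw [diffF_sub] at e1 e2
  have a1 := le_abs_self (Jderiv Ω Q s p pM r lam u (fun x => u x - v x))
  have a2 := neg_abs_le (Jderiv Ω Q s p pM r lam v (fun x => u x - v x))
  have b1 := mul_le_mul_of_nonneg_left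
    (le_abs_self (pairing (volume.restrict Ω) r (fun _ => 1) u (fun x => u x - v x))) hlam.le
  have b2 := mul_le_mul_of_nonneg_left
    (neg_abs_le (pairing (volume.restrict Ω) r (fun _ => 1) v (fun x => u x - v x))) hlam.le
  rw [mul_add]
  rw [mul_neg] at b2
  refine hs.trans ?_
  linarith

/-- Along an `L¹` Cauchy Palais–Smale sequence of bounded modular, the modulars of the differences
tend to zero. -/
lemma cauchy_gmod (H : Setup Ω s Q p pM r m R P) {lam : ℝ} (hlam : 0 < lam) {w : ℕ → Euc N → ℝ}
    (hw : ∀ n, MX Ω s Q p pM (w n)) {B : ℝ} (hB : ∀ n i, gmod Q s (p i) (w n) ≤ B)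
    (hJd : Tendsto (fun n => sSup {y : ℝ | ∃ φ : Euc N → ℝ, memX0 Ω Q s p pM φ ∧
        WSeminorm Q s p φ ≤ 1 ∧ y = |Jderiv Ω Q s p pM r lam (w n) φ|}) atTop (𝓝 0))
    (hL : ∀ ε > 0, ∃ k0, ∀ j ≥ k0, ∀ k ≥ k0, ∫ x, |w j x - w k x| ≤ ε) :
    ∀ ε > 0, ∃ k0, ∀ j ≥ k0, ∀ k ≥ k0, ∀ i, gmod Q s (p i) (fun x => w j x - w k x) ≤ ε := by
  intro ε hε
  obtain ⟨i0⟩ := H.i0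
  have hB0 : 0 ≤ B := ((H.modQ i0).modul_nonneg _).trans (hB 0 i0)
  obtain ⟨C, hC, hemb⟩ := H.embed B
  have hO : ∀ n, omod Ω pM (w n) ≤ C := fun n => hemb _ (hw n) (hB n)
  have hN0 : (0 : ℝ) ≤ N := N.cast_nonneg
  set T : ℝ := max 1 (2 ^ P * (B + B)) with hT
  have hT1 : 1 ≤ T := le_max_left _ _
  set η : ℝ := min 1 (ε / (4 * (B + 1))) with hηdef
  have hη : 0 < η := lt_min one_pos (by positivity)
  have hη1 : η ≤ 1 := min_le_left _ _
  have hηε : η * (B + B) ≤ ε / 2 := by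
    calc η * (B + B) ≤ ε / (4 * (B + 1)) * (2 * (B + 1)) :=
          mul_le_mul (min_le_right _ _) (by linarith) (by positivity) (by positivity)
      _ = ε / 2 := by field_simp; ring
  set D : ℝ := 2 ^ P / ((1 - (1 - η) ^ (m - 1)) * η) with hD
  set δ : ℝ := ε / (2 * (|D| + 1)) with hδ
  have hδ0 : 0 < δ := by positivity
  obtain ⟨K, hK1, hK⟩ := exists_rpow_small (β := R - m)
    (ε := δ / (8 * lam * (2 ^ P * (C + C) + 1))) (by linarith [H.hR]) (by positivity)
  have hK0 : 0 < K := by linarith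
  have hKR : 0 < K ^ (R - 1) := by positivity
  obtain ⟨k1, hk1⟩ := hL (δ / (8 * lam * K ^ (R - 1))) (by positivity)
  obtain ⟨k2, hk2⟩ := eventually_atTop.mp
    (hJd.eventually (ge_mem_nhds (show (0 : ℝ) < δ / (4 * (N * T + 1)) by positivity)))
  refine ⟨max k1 k2, fun j hj k hk i => ?_⟩
  have hφ := H.sub (hw j) (hw k)
  have hgT : ∀ i, gmod Q s (p i) (fun x => w j x - w k x) ≤ T := fun i => by
    refine le_trans ?_ (le_max_right _ _)
    unfold gmod
    rw [diffF_sub]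
    refine ((H.modQ i).sub_finMod ((hw j).gm i) ((hw k).gm i)).2.trans ?_
    exact mul_le_mul_of_nonneg_left (add_le_add (hB j i) (hB k i)) (by positivity)
  have hJ : ∀ n ≥ k2, |Jderiv Ω Q s p pM r lam (w n) (fun x => w j x - w k x)| ≤ δ / 4 := by
    intro n hn
    refine (H.deriv_le hlam (hw n) hφ hT1 hgT).trans ?_
    calc _ ≤ (N * T) * (δ / (4 * (N * T + 1))) :=
          mul_le_mul_of_nonneg_left (hk2 n hn) (by positivity)
      _ = (N * T) / (N * T + 1) * (δ / 4) := by field_simp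
      _ ≤ δ / 4 := mul_le_of_le_one_left (by positivity)
          (by rw [div_le_one (by positivity)]; linarith)
  have hrp := H.rpart_le (hw j) (hw k) hK1
  have hrs : lam * (K ^ (R - 1) * (∫ x, |w j x - w k x|) +
      K ^ (R - m) * (2 ^ P * (omod Ω pM (w j) + omod Ω pM (w k)))) ≤ δ / 4 := by
    have o1 : K ^ (R - 1) * (∫ x, |w j x - w k x|) ≤ δ / (8 * lam) := by
      calc _ ≤ K ^ (R - 1) * (δ / (8 * lam * K ^ (R - 1))) :=
            mul_le_mul_of_nonneg_left (hk1 j (le_of_max_le_left hj) k (le_of_max_le_left hk)) hKR.le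
        _ = _ := by field_simp
    have o2 : K ^ (R - m) * (2 ^ P * (omod Ω pM (w j) + omod Ω pM (w k))) ≤ δ / (8 * lam) := by
      calc _ ≤ δ / (8 * lam * (2 ^ P * (C + C) + 1)) * (2 ^ P * (C + C) + 1) := by
            refine mul_le_mul hK ?_ ?_ (by positivity)
            · have : (2 : ℝ) ^ P * (omod Ω pM (w j) + omod Ω pM (w k)) ≤ 2 ^ P * (C + C) :=
                mul_le_mul_of_nonneg_left (add_le_add (hO j) (hO k)) (by positivity)
              linarith
            · exact mul_nonneg (by positivity) (add_nonneg (H.modΩ.modul_nonneg _)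
                (H.modΩ.modul_nonneg _))
        _ = _ := by field_simp
    calc _ ≤ lam * (δ / (8 * lam) + δ / (8 * lam)) :=
          mul_le_mul_of_nonneg_left (add_le_add o1 o2) hlam.le
      _ = _ := by field_simp; ring
  have hmono := H.mono_le hlam (hw j) (hw k) i
  have r1 := mul_le_mul_of_nonneg_left hrp.1 hlam.le
  have r2 := mul_le_mul_of_nonneg_left hrp.2 hlam.le
  have j1 := hJ j (le_of_max_le_right hj)
  have j2 := hJ k (le_of_max_le_right hk)
  obtain ⟨hpos, hmain⟩ := (H.modQ i).modul_sub_le_mono ((hw j).gm i) ((hw k).gm i) hη hη1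
  unfold gmod
  rw [diffF_sub]
  refine hmain.trans ?_
  rw [← hD]
  set Z := pairing (volume.restrict Q) (p i) (gagW s (p i)) (diffF (w j))
    (fun z => diffF (w j) z - diffF (w k) z) -
      pairing (volume.restrict Q) (p i) (gagW s (p i)) (diffF (w k))
        (fun z => diffF (w j) z - diffF (w k) z)
  have hZ : Z ≤ δ := by rw [mul_add] at hmono; linarith
  have z1 : D * Z ≤ ε / 2 := by
    calc D * Z ≤ (|D| + 1) * δ :=
          mul_le_mul (by linarith [le_abs_self D]) hZ hpos (by positivity)
      _ = ε / 2 := by rw [hδ]; field_simp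
  have z2 : η * (modul (volume.restrict Q) (p i) (gagW s (p i)) (diffF (w j)) +
      modul (volume.restrict Q) (p i) (gagW s (p i)) (diffF (w k))) ≤ η * (B + B) :=
    mul_le_mul_of_nonneg_left (add_le_add (hB j i) (hB k i)) hη.le
  linarith

end Setup

/-- An `L¹` Cauchy sequence has an almost everywhere convergent subsequence. -/
lemma exists_ae_limit {w : ℕ → Euc N → ℝ} (hw : ∀ n, Integrable (w n))
    (hL : ∀ ε > 0, ∃ k0, ∀ j ≥ k0, ∀ k ≥ k0, ∫ x, |w j x - w k x| ≤ ε) :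
    ∃ τ : ℕ → ℕ, StrictMono τ ∧ ∃ v : Euc N → ℝ, Measurable v ∧
      ∀ᵐ x, Tendsto (fun n => w (τ n) x) atTop (𝓝 (v x)) := by
  set f : ℕ → Lp ℝ 1 (volume : Measure (Euc N)) := fun n => (hw n).toL1 (w n) with hf
  have hfw : ∀ n, f n =ᵐ[volume] w n := fun n => (hw n).coeFn_toL1
  have hc : CauchySeq f := by
    refine Metric.cauchySeq_iff.mpr fun ε hε => ?_
    obtain ⟨k0, hk0⟩ := hL (ε / 2) (by positivity)
    refine ⟨k0, fun j hj k hk => ?_⟩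
    rw [L1.dist_eq_integral_dist]
    refine lt_of_le_of_lt ((integral_congr_ae ?_).le.trans (hk0 j hj k hk)) (by linarith)
    filter_upwards [hfw j, hfw k] with x h1 h2
    rw [h1, h2, Real.dist_eq]
  obtain ⟨g, hg⟩ := cauchySeq_tendsto_of_complete hc
  obtain ⟨τ, hτ, hlim⟩ := (tendstoInMeasure_of_tendsto_Lp hg).exists_seq_tendsto_ae
  have hgm := (Lp.aestronglyMeasurable g)
  refine ⟨τ, hτ, hgm.mk g, hgm.stronglyMeasurable_mk.measurable, ?_⟩
  filter_upwards [hlim, hgm.ae_eq_mk, ae_all_iff.mpr hfw] with x h1 h2 h3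
  rw [← h2]
  simpa only [h3] using h1

namespace Setup

/-- Passage to the limit: a sequence of bounded modular, Cauchy for all Gagliardo modulars and
converging almost everywhere, converges strongly. -/
lemma strong_limit (H : Setup Ω s Q p pM r m R P) {w : ℕ → Euc N → ℝ}
    (hw : ∀ n, MX Ω s Q p pM (w n)) {C : ℝ} (hO : ∀ n, omod Ω pM (w n) ≤ C)
    (hG : ∀ ε > 0, ∃ k0, ∀ j ≥ k0, ∀ k ≥ k0, ∀ i, gmod Q s (p i) (fun x => w j x - w k x) ≤ ε)
    (hv : Measurable v) (hlim : ∀ᵐ x, Tendsto (fun n => w n x) atTop (𝓝 (v x))) :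
    memX0 Ω Q s p pM v ∧ Tendsto (fun n => WSeminorm Q s p (fun x => w n x - v x)) atTop (𝓝 0) := by
  have hlimQ : ∀ᵐ z ∂(volume.restrict Q), Tendsto (fun n => diffF (w n) z) atTop (𝓝 (diffF v z)) := by
    refine ae_restrict_of_ae ?_
    have h1 := Measure.quasiMeasurePreserving_fst (μ := (volume : Measure (Euc N)))
      (ν := (volume : Measure (Euc N))) |>.ae hlim
    have h2 := Measure.quasiMeasurePreserving_snd (μ := (volume : Measure (Euc N)))
      (ν := (volume : Measure (Euc N))) |>.ae hlim
    rw [Measure.volume_eq_prod]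
    filter_upwards [h1, h2] with z a b
    exact a.sub b
  have key : ∀ ε > 0, ∃ k0, ∀ j ≥ k0, ∀ i,
      FinMod (volume.restrict Q) (p i) (gagW s (p i)) (diffF fun x => w j x - v x) ∧
      gmod Q s (p i) (fun x => w j x - v x) ≤ ε := fun ε hε => by
    obtain ⟨k0, hk0⟩ := hG ε hε
    refine ⟨k0, fun j hj i => ?_⟩
    refine (H.modQ i).fatou (F := fun n => diffF fun x => w j x - w (n + k0) x)
      (fun n => (H.sub (hw j) (hw (n + k0))).gm i)
      (f := diffF fun x => w j x - v x) (diffF_meas ((hw j).meas.sub hv)).aemeasurable ?_ (fun n => hk0 j hj _ (by omega) i)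
    filter_upwards [hlimQ] with z hz
    rw [show diffF (fun x => w j x - v x) z = diffF (w j) z - diffF v z from congrFun diffF_sub z]
    simp only [diffF_sub]
    exact (((tendsto_add_atTop_iff_nat k0).mpr hz).const_sub _)
  have hvX : MX Ω s Q p pM v := by
    refine ⟨hv, (H.modΩ.fatou (fun n => (hw n).om) hv.aemeasurable (ae_restrict_of_ae hlim)
      hO).1, fun i => ?_, ?_⟩
    · obtain ⟨k0, hk0⟩ := key 1 one_pos
      have := ((H.modQ i).sub_finMod ((hw k0).gm i) (hk0 k0 le_rfl i).1).1
      rw [← diffF_sub] at this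
      simpa using this
    · filter_upwards [hlim, ae_all_iff.mpr fun n => (hw n).zero] with x h1 h2 hx
      refine tendsto_nhds_unique h1 ?_
      simp only [h2 _ hx]
      exact tendsto_const_nhds
  refine ⟨H.memX0_iff.mpr hvX, ?_⟩
  rw [show (0 : ℝ) = ∑ _i : Fin N, (0 : ℝ) by simp]
  refine tendsto_finsetSum _ fun i _ => ?_
  refine Metric.tendsto_atTop.mpr fun ε hε => ?_
  set ν := min 1 (ε / 2) with hν
  have hν0 : 0 < ν := lt_min one_pos (by positivity)
  obtain ⟨k0, hk0⟩ := key (ν ^ P) (by positivity)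
  refine ⟨k0, fun n hn => ?_⟩
  have h1 := (H.modQ i).lux_le_of_small (hk0 n hn i).1 hν0 (min_le_left _ _) (hk0 n hn i).2
  rw [gagSemi_eq_lux, Real.dist_eq, sub_zero, abs_of_nonneg lux_nonneg]
  linarith [min_le_right 1 (ε / 2)]

end Setup

end

/-- the functional `J_λ` satisfies the Palais–Smale condition on `X₀`. -/
theorem palais_smale_condition
    {N : ℕ} (hN : 2 ≤ N) (Ω : Set (Euc N)) (hΩo : IsOpen Ω)
    (hΩb : Bornology.IsBounded Ω) (s : ℝ) (hs : s ∈ Set.Ioo (0:ℝ) 1)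
    (Q : Set (Euc N × Euc N)) (hQ : Q = (Ωᶜ ×ˢ Ωᶜ)ᶜ)
    (p : Fin N → Euc N × Euc N → ℝ)
    (hp_cont : ∀ i, ContinuousOn (p i) (closure Q))
    (hp_symm : ∀ i, ∀ z ∈ closure Q, p i z = p i (z.2, z.1))
    (hp_bounds : ∀ i, ∃ pm pp : ℝ, 1 < pm ∧
      ∀ z ∈ closure Q, pm ≤ p i z ∧ p i z ≤ pp)
    (pM : Euc N → ℝ) (hpM : ∀ x, pM x = ⨆ i, p i (x, x))
    (Pm : ℝ) (hPm : IsGLB {y : ℝ | ∃ i : Fin N, ∃ z ∈ closure Q, p i z = y} Pm)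
    (r : Euc N → ℝ) (hr_cont : ContinuousOn r (closure Ω))
    (hr : ∀ x ∈ closure Ω, 1 < r x ∧ r x < Pm)
    (hsp : ∀ i, ∀ z ∈ closure Q, s * p i z < N)
    (lam : ℝ) (hlam : 0 < lam)
    (w : ℕ → Euc N → ℝ) (hw : ∀ n, memX0 Ω Q s p pM (w n)) (c : ℝ)
    (hJc : Tendsto (fun n => Jfun Ω Q s p pM r lam (w n)) atTop (𝓝 c))
    (hJd : Tendsto (fun n => sSup {y : ℝ | ∃ φ : Euc N → ℝ, memX0 Ω Q s p pM φ ∧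
        WSeminorm Q s p φ ≤ 1 ∧ y = |Jderiv Ω Q s p pM r lam (w n) φ|})
      atTop (𝓝 0)) :
    ∃ σ : ℕ → ℕ, StrictMono σ ∧ ∃ v : Euc N → ℝ, memX0 Ω Q s p pM v ∧
      Tendsto (fun k => WSeminorm Q s p (fun x => w (σ k) x - v x)) atTop (𝓝 0) := by
  rcases Ω.eq_empty_or_nonempty with hΩ | hΩ
  -- For empty `Ω` the set `Q` is empty, so the set of exponents has no greatest lower bound.
  · have hQe : Q = ∅ := by rw [hQ, hΩ]; simp
    have : Pm + 1 ≤ Pm := hPm.2 (by rintro y ⟨i, z, hz, -⟩; simp [hQe] at hz)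
    linarith
  obtain ⟨x0, hx0, hmax⟩ := hΩb.isCompact_closure.exists_isMaxOn hΩ.closure hr_cont
  choose pm pp hpm using hp_bounds
  have hm1 : 1 < Pm := (hr x0 hx0).1.trans (hr x0 hx0).2
  have H : Setup Ω s Q p pM r Pm (r x0) (1 + ∑ i, |pp i|) :=
    { hN := hN, ho := hΩo, hb := hΩb, hs := hs.1, hQ := hQ, hpc := hp_cont, hpM := hpM
      hpb := fun i z hz => ⟨hPm.1 ⟨i, z, hz, rfl⟩, by
        have h1 := Finset.single_le_sum (f := fun i => |pp i|) (fun j _ => abs_nonneg _)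
          (Finset.mem_univ i)
        have h2 := le_abs_self (pp i)
        have h3 := ((hpm i).2 z hz).2
        linarith⟩
      hrc := hr_cont, hr := fun x hx => ⟨(hr x hx).1, hmax hx⟩, hR := (hr x0 hx0).2, hm := hm1 }
  have hP : 0 < 1 + ∑ i, |pp i| := by
    have : 0 ≤ ∑ i, |pp i| := Finset.sum_nonneg fun _ _ => abs_nonneg _
    linarith
  have hwX : ∀ n, MX Ω s Q p pM (w n) := fun n => H.memX0_iff.mp (hw n)
  obtain ⟨A, hA⟩ := hJc.bddAbove_range
  obtain ⟨B, hB⟩ := H.energy_bound hP hlam A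
  have hwB : ∀ n i, gmod Q s (p i) (w n) ≤ B := fun n => hB _ (hwX n) (hA ⟨n, rfl⟩)
  obtain ⟨C, -, hemb⟩ := H.embed B
  obtain ⟨C1, -, hl1⟩ := H.l1_bound
  obtain ⟨σ, hσ, hL⟩ := H.compact_l1 hwX hwB
  have hG := H.cauchy_gmod hlam (fun n => hwX (σ n)) (fun n => hwB (σ n))
    (hJd.comp hσ.tendsto_atTop) hL
  obtain ⟨τ, hτ, v, hv, hlim⟩ := exists_ae_limit (fun n => (hl1 _ (hwX (σ n))).1) hL
  obtain ⟨h1, h2⟩ := H.strong_limit (w := fun n => w (σ (τ n))) (fun n => hwX _)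
    (fun n => hemb _ (hwX _) (hwB _)) (fun ε hε => by
      obtain ⟨k0, hk0⟩ := hG ε hε
      exact ⟨k0, fun j hj k hk => hk0 _ (hj.trans (hτ.id_le j)) _ (hk.trans (hτ.id_le k))⟩)
    hv hlim
  exact ⟨σ ∘ τ, hσ.comp hτ, v, h1, h2⟩
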